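/- For all positive integers n and k, the following identity holds as formal power series in q: q^{k(k+1)(6n+8k+1)/6} · Σ_{π∈RPP(δ_{n+2k+1}/δ_n)} q^{|π|} = det( E*_{2i+2j̄+1}(q)/(q;q)_{2i+2j̄+1} )_{i,j=1}^{n+k}, where j̄ = j−n−1 if j > n and j̄ = −j if j ≤ n, and where by convention an entry with 2i+2j̄+1 < 0 equals 0. -/

import Mathlib

open Finset

attribute [local instance 10] Classical.propDecidable

noncomputable section

namespace Paper

/-! ### Words and permutation statistics (all words are 1-based). -/

/-- The word (one-line notation, 1-based) of a permutation of `{1, …, N}`: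
`word π i = π(i)` for `1 ≤ i ≤ N`, and `0` otherwise. -/
def word {N : ℕ} (π : Equiv.Perm (Fin N)) (i : ℕ) : ℕ :=
  if h : 1 ≤ i ∧ i ≤ N then (π ⟨i - 1, by omega⟩ : ℕ) + 1 else 0

/-- The major index of a word of length `N`: the sum of the descents. -/
def majW (N : ℕ) (w : ℕ → ℕ) : ℕ :=
  ∑ i ∈ Finset.Icc 1 (N - 1), if w (i + 1) < w i then i else 0

/-- The number of inversions of a word of length `N`. -/
def invW (N : ℕ) (w : ℕ → ℕ) : ℕ :=
  (((Finset.Icc 1 N) ×ˢ (Finset.Icc 1 N)).filter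
    fun p => p.1 < p.2 ∧ w p.2 < w p.1).card

/-- The number of descents of a word of length `m`. -/
def desW (m : ℕ) (w : ℕ → ℕ) : ℕ :=
  ((Finset.Icc 1 (m - 1)).filter fun i => w (i + 1) < w i).card

/-- The number of ascents of a word of length `m`. -/
def ascW (m : ℕ) (w : ℕ → ℕ) : ℕ :=
  ((Finset.Icc 1 (m - 1)).filter fun i => w i < w (i + 1)).card

/-- The number of non-descents of a word of length `m`. -/
def ndesW (m : ℕ) (w : ℕ → ℕ) : ℕ :=
  ((Finset.Icc 1 m).filter fun i => i = m ∨ w i < w (i + 1)).card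

/-- The number of non-ascents of a word of length `m`. -/
def nascW (m : ℕ) (w : ℕ → ℕ) : ℕ :=
  ((Finset.Icc 1 m).filter fun i => i = m ∨ ¬ w i < w (i + 1)).card

/-- `π_e = π₂π₄⋯`, the subword of even-position entries, as a 1-based word. -/
def evenWord {N : ℕ} (π : Equiv.Perm (Fin N)) (j : ℕ) : ℕ := word π (2 * j)

/-- `π_o = π₁π₃⋯`, the subword of odd-position entries, as a 1-based word. -/
def oddWord {N : ℕ} (π : Equiv.Perm (Fin N)) (j : ℕ) : ℕ := word π (2 * j - 1)

/-- A word of length `N` is alternating: `w₁ < w₂ > w₃ < w₄ > ⋯`. -/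
def IsAltW (N : ℕ) (w : ℕ → ℕ) : Prop :=
  ∀ i ∈ Finset.Icc 1 (N - 1), (i % 2 = 1 → w i < w (i + 1)) ∧ (i % 2 = 0 → w (i + 1) < w i)

/-- A word of length `N` is reverse alternating: `w₁ > w₂ < w₃ > w₄ < ⋯`. -/
def IsRaltW (N : ℕ) (w : ℕ → ℕ) : Prop :=
  ∀ i ∈ Finset.Icc 1 (N - 1), (i % 2 = 1 → w (i + 1) < w i) ∧ (i % 2 = 0 → w i < w (i + 1))

/-- `Alt_N`, the set of alternating permutations of `{1, …, N}`. -/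
def altPerms (N : ℕ) : Finset (Equiv.Perm (Fin N)) :=
  Finset.univ.filter fun π => IsAltW N (word π)

/-- `Ralt_N`, the set of reverse alternating permutations of `{1, …, N}`. -/
def raltPerms (N : ℕ) : Finset (Equiv.Perm (Fin N)) :=
  Finset.univ.filter fun π => IsRaltW N (word π)

/-- `κ_N = (1)(2,3)(4,5)⋯`, acting on the 1-based values `{1, …, N}`. -/
def kappaNat (N j : ℕ) : ℕ :=
  if j % 2 = 0 ∧ 2 ≤ j ∧ j + 1 ≤ N then j + 1
  else if j % 2 = 1 ∧ 3 ≤ j ∧ j ≤ N then j - 1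
  else j

/-- `η_N = (1,2)(3,4)⋯`, acting on the 1-based values `{1, …, N}`. -/
def etaNat (N j : ℕ) : ℕ :=
  if j % 2 = 1 ∧ j + 1 ≤ N then j + 1
  else if j % 2 = 0 ∧ 2 ≤ j ∧ j ≤ N then j - 1
  else j

/-- `maj(π⁻¹)`. -/
def majInv (N : ℕ) (π : Equiv.Perm (Fin N)) : ℕ := majW N (word π.symm)

/-- `maj(κ_N π⁻¹)`. -/
def majKappaInv (N : ℕ) (π : Equiv.Perm (Fin N)) : ℕ :=
  majW N fun i => kappaNat N (word π.symm i)

/-- `maj(η_N π⁻¹)`. -/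
def majEtaInv (N : ℕ) (π : Equiv.Perm (Fin N)) : ℕ :=
  majW N fun i => etaNat N (word π.symm i)

/-- The reversal permutation `i ↦ N + 1 - i` of `Fin N`. -/
def revPerm (N : ℕ) : Equiv.Perm (Fin N) :=
  ⟨Fin.rev, Fin.rev, fun i => Fin.rev_rev i, fun i => Fin.rev_rev i⟩

/-- `φ(π)ᵢ = (N+1) - π_{N+1-i}`. -/
def phiMap {N : ℕ} (π : Equiv.Perm (Fin N)) : Equiv.Perm (Fin N) :=
  ((revPerm N).trans π).trans (revPerm N)

/-! ### Lattice paths.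

A path with `L` unit steps is encoded by `s : Fin L → Bool` (`true` = up-step `(1,1)`,
`false` = down-step `(1,-1)`). -/

/-- The vertical displacement of the `j`-th step. -/
def stepVal {L : ℕ} (s : Fin L → Bool) (j : ℕ) : ℤ :=
  if h : j < L then (if s ⟨j, h⟩ then 1 else -1) else 0

/-- The height of the path after `i` steps. -/
def pht {L : ℕ} (s : Fin L → Bool) (i : ℕ) : ℤ := ∑ j ∈ Finset.range i, stepVal s j

/-- A Dyck path: stays (weakly) above the `x`-axis and ends at height `0`. -/
def IsDyck {L : ℕ} (s : Fin L → Bool) : Prop :=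
  (∀ i ∈ Finset.range (L + 1), 0 ≤ pht s i) ∧ pht s L = 0

/-- The Dyck paths with `L` steps. -/
def dyckPaths (L : ℕ) : Finset (Fin L → Bool) := Finset.univ.filter fun s => IsDyck s

/-- The (indices of the) valleys of a path: a down-step followed by an up-step. -/
def valleys {L : ℕ} (s : Fin L → Bool) : Finset ℕ :=
  (Finset.Icc 1 (L - 1)).filter fun i => stepVal s (i - 1) = -1 ∧ stepVal s i = 1

/-- The (indices of the) peaks of a path: an up-step followed by a down-step. -/
def peaks {L : ℕ} (s : Fin L → Bool) : Finset ℕ :=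
  (Finset.Icc 1 (L - 1)).filter fun i => stepVal s (i - 1) = 1 ∧ stepVal s i = -1

/-- The (indices of the) high peaks of a path: peaks of height at least `2`. -/
def highPeaks {L : ℕ} (s : Fin L → Bool) : Finset ℕ :=
  (peaks s).filter fun i => 2 ≤ pht s i

/-- The height over abscissa `x` of a path starting at `(-m, 0)`. -/
def aht (m : ℕ) {L : ℕ} (s : Fin L → Bool) (x : ℤ) : ℤ := pht s (x + m).toNat

/-- `D₁ < D₂`, for `D₁` starting at `(-m₁,0)` and `D₂` at `(-m₂,0)`, `m₁ ≤ m₂`: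
strictly below on the common range of abscissas. -/
def PathLT (m₁ m₂ : ℕ) {L₁ L₂ : ℕ} (s₁ : Fin L₁ → Bool) (s₂ : Fin L₂ → Bool) : Prop :=
  ∀ x ∈ Finset.Icc (-(m₁ : ℤ)) (m₁ : ℤ), aht m₁ s₁ x < aht m₂ s₂ x

/-- `D₁ ≤ D₂`: weakly below, sharing no step. -/
def PathLE (m₁ m₂ : ℕ) {L₁ L₂ : ℕ} (s₁ : Fin L₁ → Bool) (s₂ : Fin L₂ → Bool) : Prop :=
  (∀ x ∈ Finset.Icc (-(m₁ : ℤ)) (m₁ : ℤ), aht m₁ s₁ x ≤ aht m₂ s₂ x) ∧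
    ∀ x ∈ Finset.Icc (-(m₁ : ℤ)) ((m₁ : ℤ) - 1),
      ¬(aht m₁ s₁ x = aht m₂ s₂ x ∧ aht m₁ s₁ (x + 1) = aht m₂ s₂ (x + 1))

/-- The abscissas of the common lattice points of two paths. -/
def interPts (m₁ m₂ : ℕ) {L₁ L₂ : ℕ} (s₁ : Fin L₁ → Bool) (s₂ : Fin L₂ → Bool) : Finset ℤ :=
  (Finset.Icc (-(m₁ : ℤ)) (m₁ : ℤ)).filter fun x => aht m₁ s₁ x = aht m₂ s₂ x

/-- `Dyck^k_{2n}`: tuples `(D₁, …, D_k)` with `D_i ∈ Dyck((-n-2i+2,0) → (n+2i-2,0))`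
(0-based: `D_i` has half-length `n + 2i`). -/
abbrev DyckTuple (n k : ℕ) := ∀ i : Fin k, Fin (2 * (n + 2 * (i : ℕ))) → Bool

/-- The tuples `(D₁ ≤ D₂ ≤ ⋯ ≤ D_k) ∈ Dyck^k_{2n}`. -/
def weakTuples (n k : ℕ) : Finset (DyckTuple n k) :=
  Finset.univ.filter fun D =>
    (∀ i : Fin k, IsDyck (D i)) ∧
      ∀ (i : ℕ) (h : i + 1 < k),
        PathLE (n + 2 * i) (n + 2 * (i + 1)) (D ⟨i, by omega⟩) (D ⟨i + 1, h⟩)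

/-- The tuples `(D₁ < D₂ < ⋯ < D_k) ∈ Dyck^k_{2n}`. -/
def strictTuples (n k : ℕ) : Finset (DyckTuple n k) :=
  Finset.univ.filter fun D =>
    (∀ i : Fin k, IsDyck (D i)) ∧
      ∀ (i : ℕ) (h : i + 1 < k),
        PathLT (n + 2 * i) (n + 2 * (i + 1)) (D ⟨i, by omega⟩) (D ⟨i + 1, h⟩)

/-- The lattice points of a path starting at `(-m, 0)`, as a finite subset of `ℤ × ℤ`. -/
def pathPoints (m : ℕ) {L : ℕ} (s : Fin L → Bool) : Finset (ℤ × ℤ) :=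
  (Finset.range (L + 1)).image fun t : ℕ => (-(m : ℤ) + (t : ℤ), pht s t)

/-- The non-valley lattice points of a path starting at `(-m, 0)`. -/
def nonValleyPoints (m : ℕ) {L : ℕ} (s : Fin L → Bool) : Finset (ℤ × ℤ) :=
  ((Finset.range (L + 1)).filter fun t => t ∉ valleys s).image
    fun t : ℕ => (-(m : ℤ) + (t : ℤ), pht s t)

section Weights

variable {F : Type*} [Field F]

/-- The `i`-th lattice point (in `ℤ × ℕ`) of a path starting at `(a, 0)`. -/
def ptOf (a : ℤ) {L : ℕ} (s : Fin L → Bool) (i : ℕ) : ℤ × ℕ := (a + i, (pht s i).toNat)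

/-- `wt_V(D) = ∏_{p ∈ D} wt(p) · ∏_{p ∈ V(D)} w̃t(p)` for a path starting at `(a, 0)`. -/
def wtVal (wt wte : ℤ × ℕ → F) (a : ℤ) {L : ℕ} (s : Fin L → Bool) : F :=
  (∏ i ∈ Finset.range (L + 1), wt (ptOf a s i)) * ∏ i ∈ valleys s, wte (ptOf a s i)

/-- `wt_HP(D) = ∏_{p ∈ D} wt(p) · ∏_{p ∈ HP(D)} w̃t(p)` for a path starting at `(a, 0)`. -/
def wtHigh (wt wte : ℤ × ℕ → F) (a : ℤ) {L : ℕ} (s : Fin L → Bool) : F :=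
  (∏ i ∈ Finset.range (L + 1), wt (ptOf a s i)) * ∏ i ∈ highPeaks s, wte (ptOf a s i)

/-- `∏_{p ∈ D₁ ∩ D₂} f(p)`, for `D₁` starting at `(-m₁,0)` and `D₂` at `(-m₂,0)`. -/
def interProd (f : ℤ × ℕ → F) (m₁ m₂ : ℕ) {L₁ L₂ : ℕ}
    (s₁ : Fin L₁ → Bool) (s₂ : Fin L₂ → Bool) : F :=
  ∏ x ∈ interPts m₁ m₂ s₁ s₂, f (x, (aht m₁ s₁ x).toNat)

/-- The sum over `(D₁ ≤ ⋯ ≤ D_k) ∈ Dyck^k_{2n}` of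
`wt_V(D₁)⋯wt_V(D_k) ∏_{i=1}^{k-1} ∏_{p ∈ D_i ∩ D_{i+1}} (1 - w̃t(p)⁻¹)`. -/
def weakSum (wt wte : ℤ × ℕ → F) (n k : ℕ) : F :=
  ∑ D ∈ weakTuples n k,
    (∏ i : Fin k, wtVal wt wte (-(n : ℤ) - 2 * (i : ℕ)) (D i)) *
      ∏ j : Fin (k - 1),
        interProd (fun p => 1 - (wte p)⁻¹) (n + 2 * (j : ℕ)) (n + 2 * ((j : ℕ) + 1))
          (D ⟨(j : ℕ), by have := j.isLt; omega⟩)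
          (D ⟨(j : ℕ) + 1, by have := j.isLt; omega⟩)

/-- The sum over `(D₁ < ⋯ < D_k) ∈ Dyck^k_{2n}` of `wt_V(D₁)⋯wt_V(D_k)`. -/
def strictSum (wt wte : ℤ × ℕ → F) (n k : ℕ) : F :=
  ∑ D ∈ strictTuples n k, ∏ i : Fin k, wtVal wt wte (-(n : ℤ) - 2 * (i : ℕ)) (D i)

end Weights

/-! ### Schröder paths.

A path with `L` steps is encoded by `st : Fin L → Fin 3`
(`0` = up-step `(1,1)`, `1` = down-step `(1,-1)`, `2` = horizontal step `(2,0)`). -/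

/-- The horizontal displacement of the `j`-th step. -/
def stepX {L : ℕ} (st : Fin L → Fin 3) (j : ℕ) : ℕ :=
  if h : j < L then (if st ⟨j, h⟩ = 2 then 2 else 1) else 0

/-- The vertical displacement of the `j`-th step. -/
def stepY {L : ℕ} (st : Fin L → Fin 3) (j : ℕ) : ℤ :=
  if h : j < L then (if st ⟨j, h⟩ = 0 then 1 else if st ⟨j, h⟩ = 1 then -1 else 0) else 0

/-- The horizontal position (relative to the start) after `j` steps. -/
def xpos {L : ℕ} (st : Fin L → Fin 3) (j : ℕ) : ℕ := ∑ t ∈ Finset.range j, stepX st t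

/-- The height after `j` steps. -/
def ypos {L : ℕ} (st : Fin L → Fin 3) (j : ℕ) : ℤ := ∑ t ∈ Finset.range j, stepY st t

/-- A (little) Schröder path of horizontal span `2m`: nonnegative heights, ends at
height `0`, and no horizontal step on the `x`-axis. -/
def IsSch (m : ℕ) {L : ℕ} (st : Fin L → Fin 3) : Prop :=
  xpos st L = 2 * m ∧ (∀ j ∈ Finset.range (L + 1), 0 ≤ ypos st j) ∧ ypos st L = 0 ∧
    ∀ j ∈ Finset.range L, stepX st j = 2 → ypos st j ≠ 0

/-- The height of a Schröder path over the relative abscissa `x` (midpoints of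
horizontal steps get the height of that horizontal step). -/
def schHeight {L : ℕ} (st : Fin L → Fin 3) (x : ℕ) : ℤ :=
  ∑ t ∈ Finset.range L, if xpos st (t + 1) ≤ x then stepY st t else 0

/-- The relative abscissa `x` is the midpoint of a horizontal step. -/
def IsHMid {L : ℕ} (st : Fin L → Fin 3) (x : ℕ) : Prop :=
  ∃ j ∈ Finset.range L, stepX st j = 2 ∧ xpos st j + 1 = x

/-- The number of horizontal steps of a Schröder path. -/
def hsCount {L : ℕ} (st : Fin L → Fin 3) : ℕ :=
  ((Finset.range L).filter fun j => stepX st j = 2).card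

/-- `wt_Sch(c, S) = c^{hs(S)} ∏_{p ∈ S} wt(p)` for a Schröder path starting at `(a,0)`. -/
def wtSch {F : Type*} [Field F] (wt : ℤ × ℕ → F) (c : F) (a : ℤ) {L : ℕ}
    (st : Fin L → Fin 3) : F :=
  c ^ hsCount st * ∏ j ∈ Finset.range (L + 1), wt (a + xpos st j, (ypos st j).toNat)

/-- `φ_V(S) = D`: the Dyck path `D` (with `L'` steps) is obtained from the Schröder
path `S` by replacing each horizontal step by a down-step followed by an up-step. -/
def PhiVEq {L L' : ℕ} (st : Fin L → Fin 3) (s : Fin L' → Bool) : Prop :=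
  ∀ x ∈ Finset.range (L' + 1),
    pht s x = schHeight st x - (if IsHMid st x then 1 else 0)

/-- `φ_HP(S) = D`: the Dyck path `D` is obtained from the Schröder path `S` by
replacing each horizontal step by an up-step followed by a down-step. -/
def PhiHPEq {L L' : ℕ} (st : Fin L → Fin 3) (s : Fin L' → Bool) : Prop :=
  ∀ x ∈ Finset.range (L' + 1),
    pht s x = schHeight st x + (if IsHMid st x then 1 else 0)

/-! ### Young diagrams, excited and pleasant diagrams, reverse plane partitions. -/

/-- The cells (1-based, matrix coordinates) of the staircase `δ_m = (m-1, m-2, …, 1)`. -/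
def deltaCells (m : ℕ) : Finset (ℕ × ℕ) :=
  ((Finset.Icc 1 m) ×ˢ (Finset.Icc 1 m)).filter fun c => c.1 + c.2 ≤ m

/-- An excited move inside the Young diagram `lam`. -/
def ExcitedStep (lam : Finset (ℕ × ℕ)) (D D' : Finset (ℕ × ℕ)) : Prop :=
  ∃ i j : ℕ, (i, j) ∈ D ∧ (i + 1, j) ∉ D ∧ (i, j + 1) ∉ D ∧ (i + 1, j + 1) ∉ D ∧
    (i + 1, j + 1) ∈ lam ∧ D' = insert (i + 1, j + 1) (D.erase (i, j))

/-- `D` is an excited diagram of `lam/mu`. -/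
def IsExcited (lam mu D : Finset (ℕ × ℕ)) : Prop :=
  Relation.ReflTransGen (ExcitedStep lam) mu D

/-- `P` is a pleasant diagram of `lam/mu`: a subset of `lam \ D` for an excited diagram `D`. -/
def IsPleasant (lam mu : Finset (ℕ × ℕ)) (P : Finset (ℕ × ℕ)) : Prop :=
  ∃ D, IsExcited lam mu D ∧ P ⊆ lam \ D

/-- `p(lam/mu)`, the number of pleasant diagrams of `lam/mu`. -/
def pleasantCount (lam mu : Finset (ℕ × ℕ)) : ℕ :=
  Set.ncard {P : Finset (ℕ × ℕ) | IsPleasant lam mu P}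

/-- A reverse plane partition on the skew shape `shape`: a filling by nonnegative
integers (vanishing off the shape) weakly increasing along rows and columns. -/
def IsRPP (shape : Finset (ℕ × ℕ)) (f : ℕ × ℕ → ℕ) : Prop :=
  (∀ c, c ∉ shape → f c = 0) ∧
    (∀ i j : ℕ, (i, j) ∈ shape → (i, j + 1) ∈ shape → f (i, j) ≤ f (i, j + 1)) ∧
    ∀ i j : ℕ, (i, j) ∈ shape → (i + 1, j) ∈ shape → f (i, j) ≤ f (i + 1, j)

/-- `∑_{π ∈ RPP(shape)} q^{|π|}` as a formal power series in `q`. -/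
def rppGF (shape : Finset (ℕ × ℕ)) : PowerSeries ℚ :=
  PowerSeries.mk fun N =>
    (Set.ncard {f : ℕ × ℕ → ℕ | IsRPP shape f ∧ ∑ c ∈ shape, f c = N} : ℚ)

/-- `(q; q)_m = ∏_{i=1}^m (1 - q^i)` as a formal power series. -/
def pochPS (m : ℕ) : PowerSeries ℚ :=
  ∏ i ∈ Finset.Icc 1 m, (1 - (PowerSeries.X : PowerSeries ℚ) ^ i)

/-- `E*_N(q) = ∑_{π ∈ Alt_N} q^{maj(κ_N π⁻¹)}` as a formal power series. -/
def EstarPS (N : ℕ) : PowerSeries ℚ :=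
  ∑ π ∈ altPerms N, (PowerSeries.X : PowerSeries ℚ) ^ majKappaInv N π

/-- `E*_m(q)/(q;q)_m` for `m ≥ 0`, and `0` for `m < 0`. -/
def EstarEntry (m : ℤ) : PowerSeries ℚ :=
  if m < 0 then 0 else EstarPS m.toNat * (pochPS m.toNat)⁻¹

/-- The Gaussian binomial coefficient `[N choose M]_q` as a formal power series. -/
def gaussPS (N M : ℕ) : PowerSeries ℚ :=
  pochPS N * (pochPS M * pochPS (N - M))⁻¹

/-!
The cells of the thick strip `δ_{n+2k+1}/δ_n` lie on `2(n+2k)-1` diagonals. At each depth below `k`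
they form a zigzag that runs along the strip, and the `n` cells of depth `k` count as zigzags of
length one. After adding `k` minus the depth to every entry, which contributes
`k(k+1)(6n+8k+1)/6` to the total, a reverse plane partition becomes a family of zigzags that are
weakly alternating and pairwise non-intersecting.

Such families are counted, diagonal by diagonal, by a determinant: the rows of a matrix of
generating functions of single zigzags are indexed by the zigzags, and advancing by one diagonal
turns each row into a sum over the values that are possible there. On one diagonal the ranges of
these sums are nested, so subtracting neighbouring rows removes exactly the intersecting values.
After the last diagonal, every entry is the generating function of a single zigzag that is summed
freely. Sorting the positions of a zigzag of length `2m+1` by decreasing value, with ties broken by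
`κ_{2m+1}`, gives an alternating permutation `π`, and the zigzags sorted by `π` have generating
function `q^{maj(κ_{2m+1} π⁻¹)} / (q;q)_{2m+1}`.

Entries are bounded by `M` so that all sums are finite, and generating functions are compared
modulo `q^M`.
-/

/-! ### Determinants -/

section Determinants

variable {R : Type*} [CommRing R] {ι : Type*} [Fintype ι]

theorem det_sub_row_of_lt [LinearOrder ι] (A : ι → ι → R) (s : ι → Prop) (p : ι → ι)
    (hp : ∀ i, s i → p i < i) :
    (Matrix.of fun i => if s i then A i - A (p i) else A i).det = (Matrix.of A).det := by
  set L : Matrix ι ι R := Matrix.of fun i j => if s i ∧ p i = j then 1 else 0 with hL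
  have hmul : (Matrix.of fun i => if s i then A i - A (p i) else A i) = (1 - L) * Matrix.of A := by
    ext i j
    rw [sub_mul, one_mul]
    by_cases hi : s i <;> simp [hL, Matrix.mul_apply, hi]
  have hdiag : ∀ i, ¬(s i ∧ p i = i) := fun i hi => (hp i hi.1).ne hi.2
  have hdet : (1 - L).det = 1 := by
    rw [Matrix.det_of_isLowerTriangular]
    · simp [hL, hdiag]
    · intro i j hij
      have hlt : i < j := hij
      have hne : s i → p i ≠ j := fun hi => ((hp i hi).trans hlt).ne
      simp +contextual [hL, hlt.ne, hne]
  rw [hmul, Matrix.det_mul, hdet, one_mul]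

/-- `i ↦ S i \ ⋃_{j < i} S j` is `i ↦ S i \ S (p i)`, with `p i` the predecessor of `i` in `P`. -/
theorem det_sum_eq_det_sum_filter_lt [LinearOrder ι] {α : Type*} [DecidableEq α]
    (P : ι → Prop) {S : ι → Finset α} (hS : MonotoneOn S {i | P i}) (F : α → ι → R)
    (B : ι → ι → R) :
    (Matrix.of fun i => if P i then ∑ a ∈ S i, F a else B i).det =
      (Matrix.of fun i =>
        if P i then ∑ a ∈ S i with ∀ j < i, P j → a ∉ S j, F a else B i).det := by
  have hpred : ∀ i, ∃ m, (P i ∧ ∃ j < i, P j) → IsGreatest {j | j < i ∧ P j} m := by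
    intro i
    by_cases hi : P i ∧ ∃ j < i, P j
    · obtain ⟨m, hm, hmax⟩ := Set.exists_max_image {j | j < i ∧ P j} id (Set.toFinite _) hi.2
      exact ⟨m, fun _ => ⟨hm, hmax⟩⟩
    · exact ⟨i, fun h => absurd h hi⟩
  choose p hp using hpred
  rw [← det_sub_row_of_lt _ (fun i => P i ∧ ∃ j < i, P j) p fun i hi => (hp i hi).1.1]
  congr 2
  funext i
  by_cases hi : P i
  · by_cases hex : ∃ j < i, P j
    · obtain ⟨⟨hlt, hPp⟩, hle⟩ := hp i ⟨hi, hex⟩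
      have hfilter : (S i).filter (fun a => ∀ j < i, P j → a ∉ S j) = S i \ S (p i) := by
        ext a
        simp only [mem_filter, mem_sdiff, and_congr_right_iff]
        exact fun _ => ⟨fun h => h _ hlt hPp, fun h j hj hPj ha =>
          h (hS hPj hPp (hle ⟨hj, hPj⟩) ha)⟩
      rw [if_pos ⟨hi, hex⟩, if_pos hi, hfilter, sum_sdiff_eq_sub (hS hPp hi hlt.le)]
      simp [hi, hPp]
    · rw [if_neg fun h => hex h.2, if_pos hi,
        filter_true_of_mem fun a _ j hj hPj => (hex ⟨j, hj, hPj⟩).elim]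
      simp [hi]
  · rw [if_neg fun h => hi h.1]
    simp [hi]

theorem det_sum_eq_det_sum_filter_gt [LinearOrder ι] {α : Type*} [DecidableEq α]
    (P : ι → Prop) {S : ι → Finset α} (hS : AntitoneOn S {i | P i}) (F : α → ι → R)
    (B : ι → ι → R) :
    (Matrix.of fun i => if P i then ∑ a ∈ S i, F a else B i).det =
      (Matrix.of fun i =>
        if P i then ∑ a ∈ S i with ∀ j > i, P j → a ∉ S j, F a else B i).det :=
  det_sum_eq_det_sum_filter_lt (ι := ιᵒᵈ) P hS.dual_left F B

theorem det_eq_of_forall_ne [DecidableEq ι] {A B : Matrix ι ι R} (s : ι)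
    (hrow : ∀ i, i ≠ s → A i = B i) (hcol : ∀ i, i ≠ s → B i s = 0) (hs : A s s = B s s) :
    A.det = B.det := by
  have hA : A = B.updateRow s (B s + (A s - B s)) := by
    ext i j
    rcases eq_or_ne i s with rfl | hi
    · simp
    · simp [Matrix.updateRow_ne hi, hrow i hi]
  have hzero : (B.updateRow s (A s - B s)).det = 0 := by
    refine Matrix.det_eq_zero_of_column_eq_zero s fun i => ?_
    rcases eq_or_ne i s with rfl | hi
    · simp [hs]
    · rw [Matrix.updateRow_ne hi, hcol i hi]
  rw [hA, Matrix.det_updateRow_add, Matrix.updateRow_eq_self, hzero, add_zero]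

theorem det_sum_smul [DecidableEq ι] {α : Type*} (S : ι → Finset α) (c : ι → α → R)
    (G : ι → α → ι → R) :
    (Matrix.of fun i => ∑ a ∈ S i, c i a • G i a).det =
      ∑ f ∈ Fintype.piFinset S, (∏ i, c i (f i)) * (Matrix.of fun i => G i (f i)).det := by
  refine (MultilinearMap.map_sum_finset (Matrix.detRowAlternating (R := R)).toMultilinearMap
    (fun i a => c i a • G i a) S).trans (sum_congr rfl fun f _ => ?_)
  exact MultilinearMap.map_smul_univ _ (fun i => c i (f i)) fun i => G i (f i)

end Determinants

/-! ### Chains -/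

section Chains

variable {α : Type*}

/-- The sequences `h 0, …, h (N - 1)` with `h t ∈ step t (h (t + 1))` for all `t < N`, where
`h N` stands for `x`. -/
def chains (step : ℕ → α → Finset α) : (N : ℕ) → α → Finset (Fin N → α)
  | 0, _ => {Fin.elim0}
  | N + 1, x => ((step N x).sigma fun a => chains step N a).image fun p => Fin.snoc p.2 p.1

theorem mem_chains_succ {step : ℕ → α → Finset α} {N : ℕ} {x : α} {h : Fin (N + 1) → α} :
    h ∈ chains step (N + 1) x ↔
      h (Fin.last N) ∈ step N x ∧ Fin.init h ∈ chains step N (h (Fin.last N)) := by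
  simp only [chains, mem_image, mem_sigma, Sigma.exists]
  constructor
  · rintro ⟨a, p, ⟨ha, hp⟩, rfl⟩
    simpa using ⟨ha, hp⟩
  · exact fun hh => ⟨_, _, hh, Fin.snoc_init_self h⟩

theorem restrict_mem_chains {step : ℕ → α → Finset α} {N : ℕ} {φ : ℕ → α} :
    (fun i : Fin N => φ i) ∈ chains step N (φ N) ↔ ∀ t < N, φ t ∈ step t (φ (t + 1)) := by
  induction N with
  | zero => simp [chains, eq_iff_true_of_subsingleton]
  | succ N ih =>
    rw [mem_chains_succ, Nat.forall_lt_succ_right, and_comm, ← ih]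
    rfl

theorem mem_chains_succ_iff_castSucc {step : ℕ → α → Finset α} {N : ℕ} {x : α}
    {h : Fin (N + 1) → α} :
    h ∈ chains step (N + 1) x ↔
      h (Fin.last N) ∈ step N x ∧ ∀ i : Fin N, h i.castSucc ∈ step i (h i.succ) := by
  induction N generalizing x with
  | zero =>
    rw [mem_chains_succ]
    simp [chains, eq_iff_true_of_subsingleton]
  | succ N ih =>
    rw [mem_chains_succ, ih, Fin.forall_fin_succ']
    exact and_congr_right fun _ => and_comm

/-- The extension of a finite sequence to `ℕ` with constant value `x`. -/
def extendBy {N : ℕ} (h : Fin N → α) (x : α) (t : ℕ) : α := if ht : t < N then h ⟨t, ht⟩ else x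

@[simp]
theorem extendBy_val {N : ℕ} (h : Fin N → α) (x : α) (i : Fin N) : extendBy h x i = h i :=
  dif_pos i.isLt

theorem extendBy_of_le {N t : ℕ} (h : Fin N → α) (x : α) (ht : N ≤ t) : extendBy h x t = x :=
  dif_neg ht.not_gt

theorem mem_chains_iff_extendBy {step : ℕ → α → Finset α} {N : ℕ} {x : α} {h : Fin N → α} :
    h ∈ chains step N x ↔ ∀ t < N, extendBy h x t ∈ step t (extendBy h x (t + 1)) := by
  rw [← restrict_mem_chains, extendBy_of_le h x le_rfl]
  simp only [extendBy_val]

theorem sum_chains_succ {R : Type*} [AddCommMonoid R] (step : ℕ → α → Finset α) (N : ℕ) (x : α)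
    (F : (Fin (N + 1) → α) → R) :
    ∑ h ∈ chains step (N + 1) x, F h =
      ∑ a ∈ step N x, ∑ h ∈ chains step N a, F (Fin.snoc h a) := by
  rw [chains, sum_image, sum_sigma]
  rintro ⟨a, h⟩ - ⟨a', h'⟩ - heq
  obtain ⟨rfl, rfl⟩ := Fin.snoc_injective2 heq
  rfl

theorem eq_sum_chains {R : Type*} [CommSemiring R] {step : ℕ → α → Finset α}
    {P : ℕ → α → Prop} (hP : ∀ t x, P (t + 1) x → ∀ a ∈ step t x, P t a)
    {w : α → R} {W : ℕ → α → R} (hzero : ∀ x, P 0 x → W 0 x = 1)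
    (hsucc : ∀ t x, P (t + 1) x → W (t + 1) x = ∑ a ∈ step t x, w a * W t a)
    {N : ℕ} {x : α} (hx : P N x) :
    W N x = ∑ h ∈ chains step N x, ∏ i, w (h i) := by
  induction N generalizing x with
  | zero => simp [chains, hzero x hx]
  | succ N ih =>
    rw [hsucc N x hx, sum_chains_succ]
    refine sum_congr rfl fun a ha => ?_
    simp [ih (hP N x hx a ha), Fin.prod_univ_castSucc, mul_sum, mul_comm]

end Chains

/-! ### The determinant as a sum over non-intersecting zigzags -/

section Zigzag

variable {R : Type*} [CommRing R]

/-- The values allowed on the diagonal `t` of a zigzag below `M` that has value `v` on the diagonal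
`t + 1`: a zigzag rises from even to odd diagonals and falls from odd to even ones. -/
def zigStep (M t v : ℕ) : Finset ℕ := if Even t then range (v + 1) else Ico v M

/-- `zigzagGF q M t r v` is the generating function of the zigzags below `M` on the diagonals
`2 r + 1, …, t - 1` that can be continued by the value `v` on the diagonal `t`. -/
def zigzagGF (q : R) (M : ℕ) : ℕ → ℕ → ℕ → R
  | 0, _, _ => 0
  | t + 1, r, v =>
    (if t = 2 * r then 1 else 0) + ∑ b ∈ zigStep M t v, q ^ b * zigzagGF q M t r b

theorem zigzagGF_succ (q : R) (M t r v : ℕ) :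
    zigzagGF q M (t + 1) r v =
      (if t = 2 * r then 1 else 0) + ∑ b ∈ zigStep M t v, q ^ b * zigzagGF q M t r b := rfl

theorem zigzagGF_eq_zero (q : R) (M : ℕ) {t r : ℕ} (h : t ≤ 2 * r) (v : ℕ) :
    zigzagGF q M t r v = 0 := by
  induction t generalizing v with
  | zero => rfl
  | succ t ih =>
    rw [zigzagGF_succ, if_neg (by omega), zero_add]
    exact sum_eq_zero fun b _ => by rw [ih (by omega), mul_zero]

theorem zigzagGF_add_two (q : R) (M t r v : ℕ) :
    zigzagGF q M (t + 2) (r + 1) v = zigzagGF q M t r v := by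
  induction t generalizing v with
  | zero => exact zigzagGF_eq_zero q M (by omega) v
  | succ t ih =>
    rw [zigzagGF_succ, zigzagGF_succ]
    simp only [ih, zigStep, Nat.even_add, even_two, iff_true, show t + 2 = 2 * (r + 1) ↔ t = 2 * r
      by omega]

theorem zigzagGF_add_two_mul (q : R) (M t r v : ℕ) :
    zigzagGF q M (t + 2 * r) r v = zigzagGF q M t 0 v := by
  induction r with
  | zero => rfl
  | succ r ih => rw [mul_add, ← add_assoc, mul_one, zigzagGF_add_two, ih]

theorem zigzagGF_succ_zero_eq_sum_chains (q : R) (M N v : ℕ) :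
    zigzagGF q M (N + 1) 0 v =
      ∑ σ ∈ chains (fun t => zigStep M (t + 1)) N v, ∏ i, q ^ σ i := by
  refine eq_sum_chains (P := fun _ _ => True) (W := fun t => zigzagGF q M (t + 1) 0)
    (w := (q ^ ·)) (fun _ _ _ _ _ => trivial) (fun x _ => ?_) (fun t x _ => ?_) trivial
  · simp [zigzagGF]
  · rw [zigzagGF_succ, if_neg (by omega), zero_add]

end Zigzag

section Transfer

variable {R : Type*} [CommRing R] (n k : ℕ)

/-- The zigzag `ρ` occupies the diagonals strictly between `2 ρ` and `2 * killTime n k ρ`. -/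
def killTime (ρ : ℕ) : ℕ := if ρ < k then n + 2 * k - ρ else ρ + 1

/-- The zigzag `ρ` occupies the diagonal `t`. -/
def Active (t ρ : ℕ) : Prop := 2 * ρ < t ∧ t < 2 * killTime n k ρ

variable {n k} in
theorem Active.of_lt {t ρ ρ' : ℕ} (hρ : Active n k t ρ) (hρ' : Active n k t ρ') (hlt : ρ < ρ')
    (hN : ρ' < n + k) (ht : Odd t) : Active n k (t - 1) ρ ∧ Active n k (t + 1) ρ := by
  obtain ⟨s, rfl⟩ := ht
  simp only [Active, killTime] at *
  split_ifs at * <;> omega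

theorem lt_killTime {ρ : ℕ} (hρ : ρ < n + k) : ρ < killTime n k ρ := by
  unfold killTime
  split_ifs <;> omega

theorem not_active_top (ρ : Fin (n + k)) : ¬Active n k (2 * (n + 2 * k)) ρ := by
  have := ρ.isLt
  simp only [Active, killTime]
  split_ifs <;> omega

/-- The possible values on the diagonal `t` of the zigzag `ρ` in a non-intersecting family of
zigzags with values `y` on the diagonal `t + 1`. -/
def zigzagStep (M t : ℕ) (y : Fin (n + k) → ℕ) (ρ : Fin (n + k)) : Finset ℕ :=
  (zigStep M t (y ρ)).filter fun a =>
    if Even t then ∀ ρ', ρ < ρ' → Active n k (t + 1) ρ' → y ρ' < a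
    else ∀ ρ', ρ' < ρ → Active n k t ρ' → a < y ρ'

/-- The possible values on the diagonal `t` of a non-intersecting family of zigzags with values `y`
on the diagonal `t + 1`. -/
def diagStep (M t : ℕ) (y : Fin (n + k) → ℕ) : Finset (Fin (n + k) → ℕ) :=
  Fintype.piFinset fun ρ => if Active n k t ρ then zigzagStep n k M t y ρ else {0}

/-- The families of values that non-intersecting zigzags can have on the diagonal `t`. -/
structure IsState (t : ℕ) (y : Fin (n + k) → ℕ) : Prop where
  eq_zero : ∀ ρ : Fin (n + k), ¬Active n k t ρ → y ρ = 0
  strictAntiOn : StrictAntiOn y {ρ : Fin (n + k) | Active n k t ρ}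

variable {n k}

theorem IsState.of_mem_diagStep {M t : ℕ} {y : Fin (n + k) → ℕ} {v : Fin (n + k) → ℕ}
    (hv : v ∈ diagStep n k M t y) : IsState n k t v := by
  rw [diagStep, Fintype.mem_piFinset] at hv
  refine ⟨fun ρ hρ => by simpa [hρ] using hv ρ, fun ρ (hρ : Active n k t ρ) ρ'
    (hρ' : Active n k t ρ') hlt => ?_⟩
  have h := hv ρ
  have h' := hv ρ'
  simp only [if_pos hρ, if_pos hρ', zigzagStep, mem_filter, zigStep] at h h'
  split_ifs at h h' with ht
  · have hsucc : Active n k (t + 1) ρ' := by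
      obtain ⟨s, rfl⟩ := ht
      have := hρ'.1
      have := hρ'.2
      constructor <;> omega
    exact (mem_range_succ_iff.mp h'.1).trans_lt (h.2 ρ' hlt hsucc)
  · exact (h'.2 ρ hlt hρ).trans_le (mem_Ico.mp h.1).1

theorem IsState.antitoneOn {t : ℕ} {y : Fin (n + k) → ℕ} (hy : IsState n k (t + 1) y)
    (ht : Odd t) : AntitoneOn y {ρ : Fin (n + k) | Active n k t ρ} := by
  intro ρ hρ ρ' hρ' hle
  rcases hle.eq_or_lt with rfl | hlt
  · rfl
  by_cases h' : Active n k (t + 1) ρ'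
  · exact (hy.strictAntiOn (Active.of_lt hρ hρ' hlt ρ'.isLt ht).2 h' hlt).le
  · simp [hy.eq_zero ρ' h']

/-- The row of a zigzag that does not occupy the diagonal `t`: either it starts above `t`, or it
ends below `t`. -/
def idleRow (q : R) (M t : ℕ) (ρ r : Fin (n + k)) : R :=
  if t ≤ 2 * ρ then if r = ρ then 1 else 0 else zigzagGF q M (2 * killTime n k ρ) r 0

theorem idleRow_eq_zero (q : R) (M : ℕ) {s ρ : Fin (n + k)} (hne : ρ ≠ s)
    (hρ : ¬Active n k (2 * s) ρ) : idleRow q M (2 * s) ρ s = 0 := by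
  by_cases hle : 2 * (s : ℕ) ≤ 2 * ρ
  · rw [idleRow, if_pos hle, if_neg hne.symm]
  · rw [idleRow, if_neg hle]
    refine zigzagGF_eq_zero q M ?_ 0
    simp only [Active] at hρ
    omega

/-- The row of a zigzag that has value `v` on the diagonal `t` if it occupies it. -/
def stateRow (q : R) (M t : ℕ) (ρ : Fin (n + k)) (v : ℕ) : Fin (n + k) → R :=
  if Active n k t ρ then fun r => zigzagGF q M t r v else idleRow q M t ρ

/-- The determinant that counts the non-intersecting families of zigzags on the diagonals below
`t` that can be continued by the values `y` on the diagonal `t`. -/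
def stateDet (q : R) (M t : ℕ) (y : Fin (n + k) → ℕ) : R :=
  (Matrix.of fun ρ => stateRow q M t ρ (y ρ)).det

theorem stateDet_zero (q : R) (M : ℕ) (y : Fin (n + k) → ℕ) : stateDet q M 0 y = 1 := by
  have hone : (Matrix.of fun ρ => stateRow q M 0 ρ (y ρ)) = 1 := by
    ext ρ r
    simp [stateRow, idleRow, Active, Matrix.one_apply, eq_comm]
  rw [stateDet, hone, Matrix.det_one]

theorem stateDet_top (q : R) (M : ℕ) :
    stateDet (n := n) (k := k) q M (2 * (n + 2 * k)) 0 =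
      (Matrix.of fun ρ r : Fin (n + k) => zigzagGF q M (2 * killTime n k ρ) r 0).det := by
  rw [stateDet]
  congr 2
  funext ρ r
  have := ρ.isLt
  rw [stateRow, if_neg (not_active_top n k ρ), idleRow, if_neg (by omega)]

theorem sum_diagStep_mul_stateDet (q : R) (M t : ℕ) (y : Fin (n + k) → ℕ) :
    ∑ v ∈ diagStep n k M t y, (∏ ρ, q ^ v ρ) * stateDet q M t v =
      (Matrix.of fun ρ : Fin (n + k) => if Active n k t ρ then
        ∑ a ∈ zigzagStep n k M t y ρ, q ^ a • fun r : Fin (n + k) => zigzagGF q M t r a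
        else idleRow q M t ρ).det := by
  refine (det_sum_smul _ (fun _ a => q ^ a) (stateRow q M t)).symm.trans ?_
  congr 2
  funext ρ
  by_cases hρ : Active n k t ρ
  · simp only [stateRow, if_pos hρ]
  · simp only [stateRow, if_neg hρ, sum_singleton, pow_zero, one_smul]

theorem stateRow_succ_of_odd (q : R) (M : ℕ) {t : ℕ} (ht : Odd t) {v : ℕ} (ρ : Fin (n + k))
    (hv : ¬Active n k (t + 1) ρ → v = 0) :
    stateRow q M (t + 1) ρ v = if Active n k t ρ then
      ∑ a ∈ zigStep M t v, q ^ a • fun r : Fin (n + k) => zigzagGF q M t r a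
      else idleRow q M t ρ := by
  have hodd := Nat.odd_iff.mp ht
  have hsucc : ∀ r v, zigzagGF q M (t + 1) r v =
      ∑ a ∈ zigStep M t v, q ^ a * zigzagGF q M t r a := fun r v => by
    rw [zigzagGF_succ, if_neg (by omega), zero_add]
  by_cases hρ : Active n k t ρ
  · rw [if_pos hρ]
    ext r
    by_cases hρ' : Active n k (t + 1) ρ
    · simp [stateRow, hρ', hsucc]
    · have hkill : 2 * killTime n k ρ = t + 1 := by
        simp only [Active] at hρ hρ'
        omega
      have hlt := hρ.1
      simp [stateRow, hρ', idleRow, hv hρ', hkill, hsucc, show ¬t < 2 * (ρ : ℕ) by omega]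
  · have hρ' : ¬Active n k (t + 1) ρ := by
      simp only [Active] at hρ ⊢
      omega
    ext r
    simp only [stateRow, if_neg hρ, if_neg hρ', idleRow, show t + 1 ≤ 2 * (ρ : ℕ) ↔ t ≤ 2 * ρ by
      omega]

theorem stateDet_succ_of_odd (q : R) (M : ℕ) {t : ℕ} (ht : Odd t) {y : Fin (n + k) → ℕ}
    (hy : IsState n k (t + 1) y) :
    stateDet q M (t + 1) y = ∑ v ∈ diagStep n k M t y, (∏ ρ, q ^ v ρ) * stateDet q M t v := by
  have hmono : MonotoneOn (fun ρ => Ico (y ρ) M) {ρ : Fin (n + k) | Active n k t ρ} :=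
    fun ρ hρ ρ' hρ' hle => Ico_subset_Ico_left (hy.antitoneOn ht hρ hρ' hle)
  rw [stateDet, sum_diagStep_mul_stateDet]
  simp only [stateRow_succ_of_odd q M ht _ (hy.eq_zero _), zigStep, zigzagStep,
    if_neg (Nat.not_even_iff_odd.mpr ht)]
  rw [det_sum_eq_det_sum_filter_lt (fun ρ : Fin (n + k) => Active n k t ρ) hmono]
  congr 2
  funext ρ
  refine ite_congr rfl (fun _ => sum_congr ?_ fun _ _ => rfl) fun _ => rfl
  ext a
  simp only [mem_filter, mem_Ico]
  refine and_congr_right fun _ => forall₃_congr fun ρ' _ _ => ?_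
  omega

/-- The unit vector of the zigzag that starts just above the diagonal `t`. -/
def startRow (t : ℕ) (r : Fin (n + k)) : R := if t = 2 * r then 1 else 0

/-- The row of the zigzag `ρ` on the even diagonal `t`, after subtraction of the row of the next
zigzag that occupies the diagonal `t + 1`. -/
def reducedRow (q : R) (M t : ℕ) (y : Fin (n + k) → ℕ) (ρ : Fin (n + k)) : Fin (n + k) → R :=
  if Active n k (t + 1) ρ then
    (if ∃ ρ', ρ < ρ' ∧ Active n k (t + 1) ρ' then 0 else startRow t) +
      ∑ a ∈ zigzagStep n k M t y ρ, q ^ a • fun r : Fin (n + k) => zigzagGF q M t r a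
  else idleRow q M (t + 1) ρ

theorem stateDet_succ_eq_det_reducedRow (q : R) (M : ℕ) {t : ℕ} (ht : Even t)
    {y : Fin (n + k) → ℕ} (hy : IsState n k (t + 1) y) :
    stateDet q M (t + 1) y = (Matrix.of (reducedRow q M t y)).det := by
  set S : Fin (n + k) → Finset (Option ℕ) := fun ρ => insertNone (range (y ρ + 1))
  set F : Option ℕ → Fin (n + k) → R := fun o =>
    o.elim (startRow t) fun a => q ^ a • fun r : Fin (n + k) => zigzagGF q M t r a
  have hanti : AntitoneOn S {ρ : Fin (n + k) | Active n k (t + 1) ρ} :=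
    fun ρ hρ ρ' hρ' hle => insertNone.monotone <| range_subset_range.mpr <|
      Nat.succ_le_succ (hy.strictAntiOn.antitoneOn hρ hρ' hle)
  have hrow : ∀ ρ, stateRow q M (t + 1) ρ (y ρ) =
      if Active n k (t + 1) ρ then ∑ o ∈ S ρ, F o else idleRow q M (t + 1) ρ := fun ρ => by
    refine ite_congr rfl (fun _ => ?_) fun _ => rfl
    ext r
    simp [S, F, zigzagGF_succ, zigStep, ht, sum_insertNone, startRow]
  rw [stateDet, funext hrow,
    det_sum_eq_det_sum_filter_gt (fun ρ : Fin (n + k) => Active n k (t + 1) ρ) hanti F]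
  congr 2
  funext ρ
  refine ite_congr rfl (fun _ => ?_) fun _ => rfl
  have hnone : (∀ ρ' > ρ, Active n k (t + 1) ρ' → none ∉ S ρ') ↔
      ¬∃ ρ', ρ < ρ' ∧ Active n k (t + 1) ρ' := by
    simp [S]
  rw [sum_filter, sum_insertNone]
  simp only [hnone, zigzagStep, zigStep, if_pos ht]
  rw [sum_filter, ite_not]
  simp [S, F]

theorem reducedRow_of_ne (q : R) (M : ℕ) {t : ℕ} (ht : Even t) (y : Fin (n + k) → ℕ)
    {ρ : Fin (n + k)} (hρ : t ≠ 2 * ρ) :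
    reducedRow q M t y ρ = if Active n k t ρ then
      ∑ a ∈ zigzagStep n k M t y ρ, q ^ a • fun r : Fin (n + k) => zigzagGF q M t r a
      else idleRow q M t ρ := by
  obtain ⟨s, rfl⟩ := ht
  by_cases hact : Active n k (s + s) ρ
  · have hsucc : Active n k (s + s + 1) ρ := ⟨by have := hact.1; omega, by have := hact.2; omega⟩
    have hstart : (¬∃ ρ', ρ < ρ' ∧ Active n k (s + s + 1) ρ') →
        (startRow (s + s) : Fin (n + k) → R) = 0 := fun h => by
      ext r
      refine if_neg fun hr => h ⟨r, ?_, ?_, ?_⟩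
      · have := hact.1
        omega
      · omega
      · have := lt_killTime n k r.isLt
        omega
    rw [reducedRow, if_pos hsucc, if_pos hact, ite_eq_left_iff.mpr hstart, zero_add]
  · have hsucc : ¬Active n k (s + s + 1) ρ := by
      simp only [Active] at hact ⊢
      omega
    ext r
    simp only [reducedRow, if_neg hsucc, if_neg hact, idleRow,
      show s + s + 1 ≤ 2 * (ρ : ℕ) ↔ s + s ≤ 2 * ρ by omega]

theorem stateDet_succ_of_even (q : R) (M : ℕ) {t : ℕ} (ht : Even t) {y : Fin (n + k) → ℕ}
    (hy : IsState n k (t + 1) y) :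
    stateDet q M (t + 1) y = ∑ v ∈ diagStep n k M t y, (∏ ρ, q ^ v ρ) * stateDet q M t v := by
  rw [stateDet_succ_eq_det_reducedRow q M ht hy, sum_diagStep_mul_stateDet]
  by_cases hs : ∃ s : Fin (n + k), t = 2 * s
  · obtain ⟨s, rfl⟩ := hs
    refine det_eq_of_forall_ne s (fun ρ hρ => reducedRow_of_ne q M ht y fun h => hρ ?_) ?_ ?_
    · omega
    · intro ρ hρ
      by_cases hact : Active n k (2 * s) ρ
      · simp [hact, zigzagGF_eq_zero]
      · simp [hact, idleRow_eq_zero q M hρ hact]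
    · have h1 : Active n k (2 * s + 1) s := ⟨by omega, by have := lt_killTime n k s.isLt; omega⟩
      have h2 : ¬∃ ρ', s < ρ' ∧ Active n k (2 * s + 1) ρ' := fun ⟨ρ', hlt, hρ'⟩ => by
        have := hρ'.1
        omega
      have h3 : ¬Active n k (2 * s) s := fun h => by have := h.1; omega
      simp [reducedRow, h1, h2, h3, startRow, idleRow, zigzagGF_eq_zero]
  · congr 2
    funext ρ
    exact reducedRow_of_ne q M ht y fun h => hs ⟨ρ, h⟩

theorem stateDet_eq_sum_chains (q : R) (M : ℕ) {T : ℕ} {y : Fin (n + k) → ℕ}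
    (hy : IsState n k T y) :
    stateDet q M T y = ∑ h ∈ chains (diagStep n k M) T y, ∏ i, ∏ ρ, q ^ h i ρ := by
  refine eq_sum_chains (P := IsState n k) (w := fun v => ∏ ρ, q ^ v ρ) (W := stateDet q M)
    (fun t x _ v hv => IsState.of_mem_diagStep hv)
    (fun x _ => stateDet_zero q M x) (fun t x hx => ?_) hy
  rcases Nat.even_or_odd t with ht | ht
  · exact stateDet_succ_of_even q M ht hx
  · exact stateDet_succ_of_odd q M ht hx

theorem isState_top : IsState n k (2 * (n + 2 * k)) 0 :=
  ⟨fun _ _ => rfl, fun ρ hρ => absurd hρ (not_active_top n k ρ)⟩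

theorem det_zigzagGF_eq_sum_chains (q : R) (M : ℕ) :
    (Matrix.of fun ρ r : Fin (n + k) => zigzagGF q M (2 * killTime n k ρ) r 0).det =
      ∑ h ∈ chains (diagStep n k M) (2 * (n + 2 * k)) 0, q ^ ∑ i, ∑ ρ, h i ρ := by
  rw [← stateDet_top, stateDet_eq_sum_chains q M isState_top]
  simp only [prod_pow_eq_pow_sum]

end Transfer

/-! ### Zigzags and alternating permutations -/

section Alternating

variable {R : Type*} [CommRing R]

/-- The values allowed below `M` before `v` in a sequence whose drop at the place `j` is at least
`δ (j + 1)`. -/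
def gapStep (M : ℕ) (δ : ℕ → ℕ) (j v : ℕ) : Finset ℕ := Ico (v + δ (j + 1)) M

theorem sum_gapStep_mul_one_sub {q : R} {M : ℕ} (hq : q ^ M = 0) (δ : ℕ → ℕ) (j v : ℕ) :
    (∑ a ∈ gapStep M δ j v, (q ^ (j + 1)) ^ a) * (1 - q ^ (j + 1)) =
      (q ^ (j + 1)) ^ (v + δ (j + 1)) := by
  have hzero : ∀ t, M ≤ t → (q ^ (j + 1)) ^ t = 0 := fun t ht => by
    rw [← pow_mul]
    exact pow_eq_zero_of_le (ht.trans (Nat.le_mul_of_pos_left t j.succ_pos)) hq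
  rcases le_total (v + δ (j + 1)) M with h | h
  · rw [gapStep, geom_sum_Ico_mul_neg _ h, hzero M le_rfl, sub_zero]
  · rw [gapStep, Ico_eq_empty (by omega), sum_empty, zero_mul, hzero _ h]

theorem sum_chains_gapStep_mul_prod {q : R} {M : ℕ} (hq : q ^ M = 0) (δ : ℕ → ℕ) (N v : ℕ) :
    (∑ s ∈ chains (gapStep M δ) N v, ∏ i, q ^ s i) * ∏ j ∈ Icc 1 N, (1 - q ^ j) =
      q ^ (N * (v + δ N) + ∑ j ∈ range N, j * δ j) := by
  induction N generalizing v with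
  | zero => simp [chains]
  | succ N ih =>
    have hterm : ∀ a, (∑ s ∈ chains (gapStep M δ) N a, ∏ i, q ^ (Fin.snoc s a : Fin _ → ℕ) i) *
        ∏ j ∈ Icc 1 N, (1 - q ^ j) =
          q ^ (∑ j ∈ range (N + 1), j * δ j) * (q ^ (N + 1)) ^ a := fun a => by
      simp only [Fin.prod_univ_castSucc, Fin.snoc_castSucc, Fin.snoc_last, ← sum_mul]
      rw [mul_right_comm, ih, ← pow_mul, ← pow_add, ← pow_add, sum_range_succ]
      ring_nf
    rw [sum_chains_succ, prod_Icc_succ_top N.succ_pos, ← mul_assoc, sum_mul]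
    simp only [hterm]
    rw [← mul_sum, mul_assoc, sum_gapStep_mul_one_sub hq, ← pow_mul, ← pow_add, add_comm]

theorem kappaNat_mem_Icc {N j : ℕ} (hj : j ∈ Icc 1 N) : kappaNat N j ∈ Icc 1 N := by
  rw [mem_Icc] at *
  unfold kappaNat
  split_ifs <;> omega

theorem kappaNat_kappaNat (N j : ℕ) : kappaNat N (kappaNat N j) = j := by
  unfold kappaNat
  split_ifs <;> omega

theorem kappaNat_val_add_one_mem_Icc {N : ℕ} (i : Fin N) : kappaNat N (i + 1) ∈ Icc 1 N :=
  kappaNat_mem_Icc (mem_Icc.mpr ⟨by omega, i.isLt⟩)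

/-- `κ_N` as a permutation of `Fin N`. -/
def kappaPerm (N : ℕ) : Equiv.Perm (Fin N) :=
  Function.Involutive.toPerm
    (fun i => ⟨kappaNat N (i + 1) - 1, by
      have := mem_Icc.mp (kappaNat_val_add_one_mem_Icc i)
      omega⟩)
    fun i => by
      have := mem_Icc.mp (kappaNat_val_add_one_mem_Icc i)
      ext
      simp only
      rw [Nat.sub_add_cancel this.1, kappaNat_kappaNat, Nat.add_sub_cancel]

theorem kappaPerm_val_add_one {N : ℕ} (i : Fin N) :
    (kappaPerm N i : ℕ) + 1 = kappaNat N (i + 1) :=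
  Nat.sub_add_cancel (mem_Icc.mp (kappaNat_val_add_one_mem_Icc i)).1

theorem word_add_one {N : ℕ} (π : Equiv.Perm (Fin N)) (i : Fin N) :
    word π (i + 1) = π i + 1 := by
  rw [word, dif_pos ⟨by omega, i.isLt⟩]
  rfl

theorem word_trans_kappaPerm {N j : ℕ} (π : Equiv.Perm (Fin N)) (hj : j ∈ Icc 1 N) :
    word (π.trans (kappaPerm N)) j = kappaNat N (word π j) := by
  rw [mem_Icc] at hj
  obtain ⟨j, rfl⟩ := Nat.exists_eq_add_of_le' hj.1
  have hword := fun w : Equiv.Perm (Fin N) => word_add_one w ⟨j, hj.2⟩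
  rw [hword, hword, Equiv.trans_apply, kappaPerm_val_add_one]

/-- The indicator function of the descents of a permutation. -/
def descent {N : ℕ} (w : Equiv.Perm (Fin N)) (j : ℕ) : ℕ :=
  if j < N ∧ word w (j + 1) < word w j then 1 else 0

theorem descent_self {N : ℕ} (w : Equiv.Perm (Fin N)) : descent w N = 0 :=
  if_neg fun h => lt_irrefl N h.1

theorem sum_range_mul_descent {N : ℕ} (π : Equiv.Perm (Fin N)) :
    ∑ j ∈ range N, j * descent (π.symm.trans (kappaPerm N)) j = majKappaInv N π := by
  rw [majKappaInv, majW]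
  refine (sum_subset_zero_on_sdiff (fun j hj => ?_) (fun j hj => ?_) fun j hj => ?_).symm
  · rw [mem_Icc] at hj
    rw [mem_range]
    omega
  · rw [mem_sdiff, mem_range, mem_Icc] at hj
    rw [show j = 0 by omega, zero_mul]
  · rw [mem_Icc] at hj
    have hlt : j < N := by omega
    rw [descent, word_trans_kappaPerm _ (mem_Icc.mpr ⟨by omega, hlt⟩),
      word_trans_kappaPerm _ (mem_Icc.mpr ⟨hj.1, hlt.le⟩)]
    simp only [hlt, true_and, mul_ite, mul_one, mul_zero]

theorem mem_chains_gapStep_descent_iff {N M : ℕ} {w : Equiv.Perm (Fin (N + 1))}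
    {s : Fin (N + 1) → ℕ} :
    s ∈ chains (gapStep M (descent w)) (N + 1) 0 ↔
      (∀ i, s i < M) ∧ StrictMono fun i => toLex (OrderDual.toDual (s i), w i) := by
  have hstep : ∀ i : Fin N, toLex (OrderDual.toDual (s i.castSucc), w i.castSucc) <
      toLex (OrderDual.toDual (s i.succ), w i.succ) ↔
        s i.succ + descent w (i + 1) ≤ s i.castSucc := fun i => by
    have hne : w i.castSucc ≠ w i.succ := w.injective.ne i.castSucc_lt_succ.ne
    have h := word_add_one w i.castSucc
    have h' := word_add_one w i.succ
    simp only [Fin.val_castSucc, Fin.val_succ] at h h'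
    rw [Prod.Lex.toLex_lt_toLex, descent, h, h', OrderDual.toDual_lt_toDual, OrderDual.toDual_inj,
      Fin.lt_def]
    rw [Ne, Fin.ext_iff] at hne
    simp only
    split_ifs <;> omega
  rw [mem_chains_succ_iff_castSucc, Fin.strictMono_iff_lt_succ, Fin.forall_fin_succ']
  simp only [hstep, gapStep, mem_Ico, descent_self, forall_and]
  constructor
  · exact fun h => ⟨⟨h.2.2, h.1.2⟩, h.2.1⟩
  · exact fun h => ⟨⟨Nat.zero_le _, h.1.2⟩, h.2, h.1.1⟩

/-- The order in which the permutation of a zigzag `σ` sorts the positions: by decreasing value,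
and by `κ` within the positions of equal value. -/
def sortKey {N : ℕ} (σ : Fin N → ℕ) (p : Fin N) : ℕᵒᵈ ×ₗ Fin N :=
  toLex (OrderDual.toDual (σ p), kappaPerm N p)

theorem sortKey_injective {N : ℕ} (σ : Fin N → ℕ) : Function.Injective (sortKey σ) :=
  fun _ _ h => (kappaPerm N).injective (congrArg (fun x => (ofLex x).2) h)

theorem sortKey_lt_sortKey {N : ℕ} {σ : Fin N → ℕ} {p p' : Fin N} :
    sortKey σ p < sortKey σ p' ↔ σ p' < σ p ∨ σ p = σ p' ∧ kappaPerm N p < kappaPerm N p' := by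
  rw [sortKey, sortKey, Prod.Lex.toLex_lt_toLex, OrderDual.toDual_lt_toDual, OrderDual.toDual_inj]

/-- The permutation that sends each position to its rank for `sortKey σ`. -/
def sortPerm {N : ℕ} (σ : Fin N → ℕ) : Equiv.Perm (Fin N) := (Tuple.sort (sortKey σ)).symm

theorem sortPerm_eq_iff {N : ℕ} {σ : Fin N → ℕ} {π : Equiv.Perm (Fin N)} :
    sortPerm σ = π ↔ StrictMono (sortKey σ ∘ π.symm) := by
  have hsort := Tuple.monotone_sort (sortKey σ)
  constructor
  · rintro rfl
    exact hsort.strictMono_of_injective ((sortKey_injective σ).comp (Equiv.injective _))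
  · intro h
    have hcomp := Tuple.unique_monotone hsort h.monotone
    rw [sortPerm, show Tuple.sort (sortKey σ) = π.symm from
      Equiv.ext fun i => sortKey_injective σ (congrFun hcomp i), Equiv.symm_symm]

theorem sortPerm_lt_sortPerm {N : ℕ} {σ : Fin N → ℕ} {p p' : Fin N} :
    sortPerm σ p < sortPerm σ p' ↔
      σ p' < σ p ∨ σ p = σ p' ∧ kappaPerm N p < kappaPerm N p' := by
  rw [← (sortPerm_eq_iff.mp rfl).lt_iff_lt, Function.comp, Function.comp,
    Equiv.symm_apply_apply, Equiv.symm_apply_apply, sortKey_lt_sortKey]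

theorem mem_altPerms_iff {N : ℕ} {π : Equiv.Perm (Fin (N + 1))} :
    π ∈ altPerms (N + 1) ↔ ∀ i : Fin N,
      if Even (i : ℕ) then π i.castSucc < π i.succ else π i.succ < π i.castSucc := by
  simp only [altPerms, mem_filter_univ, IsAltW, mem_Icc, Nat.add_sub_cancel]
  have hword := word_add_one π
  constructor
  · intro h i
    have := h (i + 1) ⟨by omega, i.isLt⟩
    have h₁ := hword i.castSucc
    have h₂ := hword i.succ
    simp only [Fin.val_castSucc, Fin.val_succ] at h₁ h₂
    rw [h₁, h₂] at this
    split_ifs with heven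
    · exact Fin.lt_def.mpr (by have := this.1 (by grind); omega)
    · exact Fin.lt_def.mpr (by have := this.2 (by grind); omega)
  · rintro h j ⟨hj, hjN⟩
    obtain ⟨i, rfl⟩ := Nat.exists_eq_add_of_le' hj
    have := h ⟨i, hjN⟩
    have h₁ := hword (Fin.castSucc ⟨i, hjN⟩)
    have h₂ := hword (Fin.succ ⟨i, hjN⟩)
    simp only [Fin.val_castSucc, Fin.val_succ] at h₁ h₂
    rw [h₁, h₂]
    simp only [Fin.lt_def] at this
    grind

/-- `κ` breaks ties so that the strict relations of an alternating permutation become the weak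
relations of a zigzag. -/
theorem sortPerm_mem_altPerms_iff {m : ℕ} {σ : Fin (2 * m + 1) → ℕ} :
    sortPerm σ ∈ altPerms (2 * m + 1) ↔ ∀ i : Fin (2 * m),
      if Even (i : ℕ) then σ i.succ ≤ σ i.castSucc else σ i.castSucc ≤ σ i.succ := by
  rw [mem_altPerms_iff]
  refine forall_congr' fun i => ?_
  have h := kappaPerm_val_add_one i.castSucc
  have h' := kappaPerm_val_add_one i.succ
  simp only [kappaNat, Fin.val_castSucc, Fin.val_succ] at h h'
  rw [sortPerm_lt_sortPerm, sortPerm_lt_sortPerm, Fin.lt_def, Fin.lt_def]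
  split_ifs with heven
  · have : (kappaPerm _ i.castSucc : ℕ) < kappaPerm _ i.succ := by grind
    omega
  · have : (kappaPerm _ i.succ : ℕ) < kappaPerm _ i.castSucc := by grind
    omega

theorem mem_chains_zigStep_iff {m M : ℕ} {σ : Fin (2 * m + 1) → ℕ} :
    σ ∈ chains (fun t => zigStep M (t + 1)) (2 * m + 1) 0 ↔
      (∀ i, σ i < M) ∧ sortPerm σ ∈ altPerms (2 * m + 1) := by
  have hstep : ∀ i : Fin (2 * m), σ i.castSucc ∈ zigStep M (i + 1) (σ i.succ) ↔
      (if Even (i : ℕ) then σ i.succ ≤ σ i.castSucc else σ i.castSucc ≤ σ i.succ) ∧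
        (Even (i : ℕ) → σ i.castSucc < M) := fun i => by
    by_cases hi : Even (i : ℕ) <;> simp [zigStep, Nat.even_add_one, hi]
  have hlast : σ (Fin.last (2 * m)) ∈ zigStep M (2 * m + 1) 0 ↔ σ (Fin.last (2 * m)) < M := by
    simp [zigStep]
  rw [mem_chains_succ_iff_castSucc, sortPerm_mem_altPerms_iff]
  simp only [hstep, hlast, forall_and, Fin.forall_fin_succ' (n := 2 * m)]
  constructor
  · rintro ⟨hM, hzig, heven⟩
    have heven' : ∀ p : Fin (2 * m + 1), Even (p : ℕ) → σ p < M :=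
      Fin.lastCases (fun _ => hM) heven
    refine ⟨⟨fun i => ?_, hM⟩, hzig⟩
    by_cases hi : Even (i : ℕ)
    · exact heven i hi
    · have hle := hzig i
      rw [if_neg hi] at hle
      exact hle.trans_lt (heven' i.succ (by simpa [Nat.even_add_one] using hi))
  · rintro ⟨⟨hbound, hM⟩, hzig⟩
    exact ⟨hM, hzig, fun i _ => hbound i⟩

theorem zigzagGF_mul_prod {q : R} {M : ℕ} (hq : q ^ M = 0) (m : ℕ) :
    zigzagGF q M (2 * m + 2) 0 0 * ∏ j ∈ Icc 1 (2 * m + 1), (1 - q ^ j) =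
      ∑ π ∈ altPerms (2 * m + 1), q ^ majKappaInv (2 * m + 1) π := by
  rw [zigzagGF_succ_zero_eq_sum_chains, ← sum_fiberwise_of_maps_to (g := sortPerm)
    fun σ hσ => (mem_chains_zigStep_iff.mp hσ).2, sum_mul]
  refine sum_congr rfl fun π hπ => ?_
  have hgap := sum_chains_gapStep_mul_prod hq (descent (π.symm.trans (kappaPerm _))) (2 * m + 1) 0
  rw [descent_self, add_zero, mul_zero, zero_add, sum_range_mul_descent] at hgap
  rw [← hgap]
  congr 1
  refine sum_equiv (Equiv.arrowCongr π (Equiv.refl ℕ)) (fun σ => ?_) fun σ _ => ?_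
  · have hbound : (∀ i, Equiv.arrowCongr π (Equiv.refl ℕ) σ i < M) ↔ ∀ p, σ p < M :=
      π.symm.forall_congr_right (q := fun p => σ p < M)
    rw [mem_filter, mem_chains_zigStep_iff, mem_chains_gapStep_descent_iff, hbound, and_assoc]
    refine and_congr_right fun _ => ?_
    rw [and_iff_right_of_imp fun h => h ▸ hπ, sortPerm_eq_iff]
    rfl
  · exact (Equiv.prod_comp π.symm fun i => q ^ σ i).symm

end Alternating

/-! ### Fillings of the thick strip -/

section LocalMonotone

theorem monotoneOn_prod_nat_iff {β : Type*} [Preorder β] {S : Set (ℕ × ℕ)} (hS : S.OrdConnected)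
    {f : ℕ × ℕ → β} :
    MonotoneOn f S ↔
      (∀ i j, (i, j) ∈ S → (i, j + 1) ∈ S → f (i, j) ≤ f (i, j + 1)) ∧
        ∀ i j, (i, j) ∈ S → (i + 1, j) ∈ S → f (i, j) ≤ f (i + 1, j) := by
  constructor
  · exact fun hf => ⟨fun i j hc hc' => hf hc hc' (by simp), fun i j hc hc' => hf hc hc' (by simp)⟩
  · rintro ⟨hrow, hcol⟩ ⟨i, j⟩ hc ⟨i', j'⟩ hc' ⟨hi : i ≤ i', hj : j ≤ j'⟩
    have hmem : ∀ a b, i ≤ a → a ≤ i' → j ≤ b → b ≤ j' → (a, b) ∈ S := fun a b h₁ h₂ h₃ h₄ =>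
      hS.out hc hc' ⟨⟨h₁, h₃⟩, ⟨h₂, h₄⟩⟩
    have hright : MonotoneOn (fun b => f (i, b)) (Set.Icc j j') :=
      monotoneOn_of_le_succ Set.ordConnected_Icc fun b _ hb hb' =>
        hrow i b (hmem i b le_rfl hi hb.1 hb.2) (hmem i (b + 1) le_rfl hi hb'.1 hb'.2)
    have hdown : MonotoneOn (fun a => f (a, j')) (Set.Icc i i') :=
      monotoneOn_of_le_succ Set.ordConnected_Icc fun a _ ha ha' =>
        hcol a j' (hmem a j' ha.1 ha.2 hj le_rfl) (hmem (a + 1) j' ha'.1 ha'.2 hj le_rfl)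
    exact (hright (Set.left_mem_Icc.mpr hj) (Set.right_mem_Icc.mpr hj) hj).trans
      (hdown (Set.left_mem_Icc.mpr hi) (Set.right_mem_Icc.mpr hi) hi)

theorem isRPP_iff_monotoneOn {shape : Finset (ℕ × ℕ)}
    (hs : (shape : Set (ℕ × ℕ)).OrdConnected) {f : ℕ × ℕ → ℕ} :
    IsRPP shape f ↔ (∀ c, c ∉ shape → f c = 0) ∧ MonotoneOn f shape :=
  and_congr_right fun _ => (monotoneOn_prod_nat_iff hs).symm

end LocalMonotone

section Cells

variable (n k : ℕ)

/-- The skew shape `δ_{n+2k+1}/δ_n`. -/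
abbrev thickStrip : Finset (ℕ × ℕ) := deltaCells (n + 2 * k + 1) \ deltaCells n

/-- Half the distance of a cell of the thick strip from its outer boundary. -/
def depth (c : ℕ × ℕ) : ℕ := (n + 2 * k + 1 - (c.1 + c.2)) / 2

/-- The cell of the thick strip that the zigzag `ρ` visits on the diagonal `t`: the zigzags
`0, …, k - 1` run along the strip at depths `0, …, k - 1`, and each of the other ones consists of
a single cell of depth `k`. -/
def cell (t ρ : ℕ) : ℕ × ℕ := (n + 2 * k - min ρ k - t / 2, (t + 1) / 2 - min ρ k)

/-- The diagonal of a cell. -/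
def diagOf (c : ℕ × ℕ) : ℕ := n + 2 * k + c.2 - c.1

/-- The zigzag through a cell. -/
def pathOf (c : ℕ × ℕ) : ℕ := if depth n k c < k then depth n k c else diagOf n k c / 2

variable {n k}

theorem mem_thickStrip {c : ℕ × ℕ} : c ∈ thickStrip n k ↔
    1 ≤ c.1 ∧ 1 ≤ c.2 ∧ n + 1 ≤ c.1 + c.2 ∧ c.1 + c.2 ≤ n + 2 * k + 1 := by
  simp only [thickStrip, deltaCells, mem_sdiff, mem_filter, mem_product, mem_Icc]
  omega

theorem ordConnected_thickStrip : (thickStrip n k : Set (ℕ × ℕ)).OrdConnected := by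
  refine ⟨fun a ha b hb c hc => ?_⟩
  obtain ⟨⟨h₁, h₂⟩, ⟨h₃, h₄⟩⟩ := hc
  rw [mem_coe, mem_thickStrip] at *
  omega

theorem cell_mem_thickStrip {t : ℕ} {ρ : Fin (n + k)} (hρ : Active n k t ρ) :
    cell n k t ρ ∈ thickStrip n k := by
  have := ρ.isLt
  simp only [Active, killTime] at hρ
  rw [mem_thickStrip, cell]
  split_ifs at hρ <;> omega

theorem depth_cell {t : ℕ} {ρ : Fin (n + k)} (hρ : Active n k t ρ) :
    depth n k (cell n k t ρ) = min (ρ : ℕ) k := by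
  have := ρ.isLt
  simp only [Active, killTime] at hρ
  rw [depth, cell]
  split_ifs at hρ <;> omega

theorem diagOf_cell {t : ℕ} {ρ : Fin (n + k)} (hρ : Active n k t ρ) :
    diagOf n k (cell n k t ρ) = t := by
  have := ρ.isLt
  simp only [Active, killTime] at hρ
  rw [diagOf, cell]
  split_ifs at hρ <;> omega

theorem cell_fst_add_snd {t : ℕ} {ρ : Fin (n + k)} (hρ : Active n k t ρ) :
    (cell n k t ρ).1 + (cell n k t ρ).2 + 2 * min (ρ : ℕ) k = n + 2 * k + t % 2 := by
  have := ρ.isLt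
  simp only [Active, killTime] at hρ
  rw [cell]
  split_ifs at hρ <;> omega

theorem pathOf_cell {t : ℕ} {ρ : Fin (n + k)} (hρ : Active n k t ρ) :
    pathOf n k (cell n k t ρ) = ρ := by
  rw [pathOf, depth_cell hρ, diagOf_cell hρ]
  simp only [Active, killTime] at hρ
  split_ifs at * <;> omega

theorem active_diagOf_pathOf {c : ℕ × ℕ} (hc : c ∈ thickStrip n k) :
    Active n k (diagOf n k c) (pathOf n k c) := by
  rw [mem_thickStrip] at hc
  rw [pathOf, Active, killTime]
  by_cases hd : depth n k c < k
  · rw [if_pos hd, if_pos hd]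
    simp only [depth, diagOf] at *
    omega
  · rw [if_neg hd, if_neg (by simp only [depth, diagOf] at *; omega)]
    simp only [depth, diagOf] at *
    omega

theorem pathOf_lt {c : ℕ × ℕ} (hc : c ∈ thickStrip n k) : pathOf n k c < n + k := by
  rw [mem_thickStrip] at hc
  rw [pathOf]
  split_ifs <;> simp only [depth, diagOf] at * <;> omega

theorem diagOf_lt {c : ℕ × ℕ} (hc : c ∈ thickStrip n k) : diagOf n k c < 2 * (n + 2 * k) := by
  rw [mem_thickStrip] at hc
  rw [diagOf]
  omega

theorem cell_diagOf_pathOf {c : ℕ × ℕ} (hc : c ∈ thickStrip n k) :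
    cell n k (diagOf n k c) (pathOf n k c) = c := by
  rw [mem_thickStrip] at hc
  rw [cell, pathOf]
  split_ifs <;> simp only [depth, diagOf] at * <;> ext <;> simp only <;> omega

variable (n k)

/-- The values of a filling on the cells that the zigzags visit on the diagonal `t`. -/
def diagValues (g : ℕ × ℕ → ℕ) (t : ℕ) (ρ : Fin (n + k)) : ℕ :=
  if Active n k t ρ then g (cell n k t ρ) else 0

/-- The filling of the thick strip whose values along the zigzags are given by `φ`. -/
def fillingOf (φ : ℕ → Fin (n + k) → ℕ) (c : ℕ × ℕ) : ℕ :=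
  if hc : c ∈ thickStrip n k then φ (diagOf n k c) ⟨pathOf n k c, pathOf_lt hc⟩ else 0

variable {n k}

theorem fillingOf_diagValues {g : ℕ × ℕ → ℕ} (hg : ∀ c, c ∉ thickStrip n k → g c = 0) :
    fillingOf n k (diagValues n k g) = g := by
  funext c
  by_cases hc : c ∈ thickStrip n k
  · rw [fillingOf, dif_pos hc, diagValues, if_pos (active_diagOf_pathOf hc),
      cell_diagOf_pathOf hc]
  · rw [fillingOf, dif_neg hc, hg c hc]

theorem diagValues_fillingOf {φ : ℕ → Fin (n + k) → ℕ}
    (hφ : ∀ t (ρ : Fin (n + k)), ¬Active n k t ρ → φ t ρ = 0) :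
    diagValues n k (fillingOf n k φ) = φ := by
  funext t ρ
  by_cases hρ : Active n k t ρ
  · simp only [diagValues, if_pos hρ, fillingOf, dif_pos (cell_mem_thickStrip hρ), diagOf_cell hρ,
      pathOf_cell hρ]
  · rw [diagValues, if_neg hρ, hφ t ρ hρ]

theorem sum_thickStrip (g : ℕ × ℕ → ℕ) :
    ∑ c ∈ thickStrip n k, g c =
      ∑ t ∈ range (2 * (n + 2 * k)), ∑ ρ, diagValues n k g t ρ := by
  simp only [diagValues]
  rw [sum_sigma', ← sum_filter]
  refine sum_bij' (fun c hc => ⟨diagOf n k c, ⟨pathOf n k c, pathOf_lt hc⟩⟩)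
    (fun p _ => cell n k p.1 p.2) (fun c hc => ?_) (fun p hp => ?_)
    (fun c hc => cell_diagOf_pathOf hc) (fun p hp => ?_)
    fun c hc => by rw [cell_diagOf_pathOf hc]
  · have hlt := diagOf_lt hc
    simpa using ⟨hlt, active_diagOf_pathOf hc⟩
  · exact cell_mem_thickStrip (mem_filter.mp hp).2
  · have hρ := (mem_filter.mp hp).2
    obtain ⟨t, ρ⟩ := p
    simp only [diagOf_cell hρ, pathOf_cell hρ]

/-- The interlacing relations between the values of non-intersecting zigzags on an even diagonal `e`
and an adjacent odd diagonal `o`. -/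
def Interlacing (φ : ℕ → Fin (n + k) → ℕ) : Prop :=
  ∀ e o, Even e → Odd o → o = e + 1 ∨ e = o + 1 → ∀ ρ : Fin (n + k), Active n k e ρ →
    φ e ρ ≤ φ o ρ ∧ ∀ ρ', ρ < ρ' → Active n k o ρ' → φ o ρ' < φ e ρ

theorem Active.of_even {e o ρ : ℕ} (he : Even e) (hadj : o = e + 1 ∨ e = o + 1)
    (hρ : Active n k e ρ) : Active n k o ρ := by
  obtain ⟨s, rfl⟩ := he
  simp only [Active] at *
  omega

theorem Active.lt_of_even {e ρ : ℕ} (he : Even e) (hρ : Active n k e ρ) : ρ < k := by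
  obtain ⟨s, rfl⟩ := he
  simp only [Active, killTime] at hρ
  split_ifs at hρ <;> omega

theorem Active.lt_top {t : ℕ} {ρ : Fin (n + k)} (hρ : Active n k t ρ) :
    t < 2 * (n + 2 * k) := by
  have := ρ.isLt
  simp only [Active, killTime] at hρ
  split_ifs at hρ <;> omega

theorem mem_diagStep_iff_of_even {M t : ℕ} (ht : Even t) {y v : Fin (n + k) → ℕ}
    (hv : ∀ ρ : Fin (n + k), ¬Active n k t ρ → v ρ = 0) :
    v ∈ diagStep n k M t y ↔ ∀ ρ : Fin (n + k), Active n k t ρ →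
      v ρ ≤ y ρ ∧ ∀ ρ', ρ < ρ' → Active n k (t + 1) ρ' → y ρ' < v ρ := by
  rw [diagStep, Fintype.mem_piFinset]
  refine forall_congr' fun ρ => ?_
  by_cases hρ : Active n k t ρ
  · simp [hρ, zigzagStep, zigStep, ht]
  · simp [hρ, hv ρ hρ]

theorem mem_diagStep_iff_of_odd {M t : ℕ} (ht : Odd t) {y v : Fin (n + k) → ℕ}
    (hv : ∀ ρ : Fin (n + k), ¬Active n k t ρ → v ρ = 0) (hM : ∀ ρ, v ρ < M) :
    v ∈ diagStep n k M t y ↔ ∀ ρ : Fin (n + k), Active n k t ρ →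
      y ρ ≤ v ρ ∧ ∀ ρ', ρ' < ρ → Active n k t ρ' → v ρ < y ρ' := by
  rw [diagStep, Fintype.mem_piFinset]
  refine forall_congr' fun ρ => ?_
  by_cases hρ : Active n k t ρ
  · simp [hρ, zigzagStep, zigStep, Nat.not_even_iff_odd.mpr ht, hM ρ]
  · simp [hρ, hv ρ hρ]

theorem forall_mem_diagStep_iff {M : ℕ} {φ : ℕ → Fin (n + k) → ℕ}
    (hzero : ∀ t (ρ : Fin (n + k)), ¬Active n k t ρ → φ t ρ = 0) (hM : ∀ t ρ, φ t ρ < M) :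
    (∀ t < 2 * (n + 2 * k), φ t ∈ diagStep n k M t (φ (t + 1))) ↔ Interlacing φ := by
  constructor
  · rintro h e o he ho (rfl | rfl) ρ hρ
    · exact (mem_diagStep_iff_of_even he (hzero e)).mp (h e hρ.lt_top) ρ hρ
    · have hρo := hρ.of_even he (Or.inr rfl)
      have hstep := (mem_diagStep_iff_of_odd ho (hzero o) (hM o)).mp (h o hρo.lt_top)
      exact ⟨(hstep ρ hρo).1, fun ρ' hlt hρ' => (hstep ρ' hρ').2 ρ hlt hρo⟩
  · intro hφ t _
    rcases Nat.even_or_odd t with ht | ht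
    · exact (mem_diagStep_iff_of_even ht (hzero t)).mpr
        (hφ t (t + 1) ht ht.add_one (Or.inl rfl))
    · have hadj := hφ (t + 1) t ht.add_one ht (Or.inr rfl)
      refine (mem_diagStep_iff_of_odd ht (hzero t) (hM t)).mpr fun ρ hρ => ⟨?_, ?_⟩
      · by_cases hsucc : Active n k (t + 1) ρ
        · exact (hadj ρ hsucc).1
        · exact (hzero _ ρ hsucc).le.trans (Nat.zero_le _)
      · exact fun ρ' hlt hρ' => (hadj ρ' (hρ'.of_lt hρ hlt ρ.isLt ht).2).2 ρ hlt hρ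

theorem cell_le_cell {e o : ℕ} {ρ : Fin (n + k)} (he : Even e) (hadj : o = e + 1 ∨ e = o + 1)
    (hρ : Active n k e ρ) : cell n k e ρ ≤ cell n k o ρ := by
  have := ρ.isLt
  obtain ⟨s, rfl⟩ := he
  simp only [Active, killTime] at hρ
  simp only [cell, Prod.mk_le_mk]
  split_ifs at hρ <;> omega

theorem cell_le_cell_of_lt {e o : ℕ} {ρ ρ' : Fin (n + k)} (he : Even e)
    (hadj : o = e + 1 ∨ e = o + 1) (hρ : Active n k e ρ) (hlt : ρ < ρ') :
    cell n k o ρ' ≤ cell n k e ρ := by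
  have := ρ.isLt
  obtain ⟨s, rfl⟩ := he
  simp only [Active, killTime] at hρ
  simp only [cell, Prod.mk_le_mk]
  split_ifs at hρ <;> omega

theorem add_depth_cell (g : ℕ × ℕ → ℕ) {t : ℕ} {ρ : Fin (n + k)} (hρ : Active n k t ρ) :
    (g + depth n k) (cell n k t ρ) = diagValues n k g t ρ + min (ρ : ℕ) k := by
  rw [Pi.add_apply, depth_cell hρ, diagValues, if_pos hρ]

theorem Interlacing.le_of_cell_le {g : ℕ × ℕ → ℕ} (hφ : Interlacing (diagValues n k g))
    {t t' : ℕ} {ρ ρ' : Fin (n + k)} (hρ : Active n k t ρ) (hρ' : Active n k t' ρ')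
    (hle : cell n k t ρ ≤ cell n k t' ρ')
    (hsum : (cell n k t' ρ').1 + (cell n k t' ρ').2 =
      (cell n k t ρ).1 + (cell n k t ρ).2 + 1) :
    (g + depth n k) (cell n k t ρ) ≤ (g + depth n k) (cell n k t' ρ') := by
  have hs := cell_fst_add_snd hρ
  have hs' := cell_fst_add_snd hρ'
  have hadj : t' = t + 1 ∨ t = t' + 1 := by
    have ht := diagOf_cell hρ
    have ht' := diagOf_cell hρ'
    have hmem := mem_thickStrip.mp (cell_mem_thickStrip hρ)
    have hmem' := mem_thickStrip.mp (cell_mem_thickStrip hρ')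
    have := hle.1
    have := hle.2
    rw [diagOf] at ht ht'
    omega
  rw [add_depth_cell g hρ, add_depth_cell g hρ']
  rcases Nat.even_or_odd t with heven | hodd
  · have hk := hρ.lt_of_even heven
    rw [Nat.even_iff] at heven
    obtain rfl : ρ' = ρ := Fin.ext (by omega)
    exact Nat.add_le_add_right (hφ t t' (Nat.even_iff.mpr heven) (Nat.odd_iff.mpr (by omega))
      hadj ρ' hρ).1 _
  · rw [Nat.odd_iff] at hodd
    have heven' : Even t' := Nat.even_iff.mpr (by omega)
    have hlt : ρ' < ρ := Fin.lt_def.mpr (by omega)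
    have := (hφ t' t heven' (Nat.odd_iff.mpr hodd) hadj.symm ρ' hρ').2 ρ hlt hρ
    omega

theorem interlacing_diagValues_iff {g : ℕ × ℕ → ℕ} :
    Interlacing (diagValues n k g) ↔ MonotoneOn (g + depth n k) (thickStrip n k) := by
  constructor
  · intro hφ
    have hunit : ∀ c c', c ∈ thickStrip n k → c' ∈ thickStrip n k → c ≤ c' →
        c'.1 + c'.2 = c.1 + c.2 + 1 → (g + depth n k) c ≤ (g + depth n k) c' :=
      fun c c' hc hc' => by
        rw [← cell_diagOf_pathOf hc, ← cell_diagOf_pathOf hc']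
        exact hφ.le_of_cell_le (ρ := ⟨_, pathOf_lt hc⟩) (ρ' := ⟨_, pathOf_lt hc'⟩)
          (active_diagOf_pathOf hc) (active_diagOf_pathOf hc')
    exact (monotoneOn_prod_nat_iff ordConnected_thickStrip).mpr
      ⟨fun i j hc hc' => hunit _ _ hc hc' (by simp) (by simp only; omega),
        fun i j hc hc' => hunit _ _ hc hc' (by simp) (by simp only; omega)⟩
  · intro hmono e o he _ hadj ρ hρ
    have hρo := hρ.of_even he hadj
    constructor
    · have hle := hmono (cell_mem_thickStrip hρ) (cell_mem_thickStrip hρo)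
        (cell_le_cell he hadj hρ)
      rw [add_depth_cell g hρ, add_depth_cell g hρo] at hle
      exact Nat.le_of_add_le_add_right hle
    · intro ρ' hlt hρ'
      have hle := hmono (cell_mem_thickStrip hρ') (cell_mem_thickStrip hρ)
        (cell_le_cell_of_lt he hadj hρ hlt)
      rw [add_depth_cell g hρ, add_depth_cell g hρ'] at hle
      have := hρ.lt_of_even he
      rw [Fin.lt_def] at hlt
      omega

end Cells

/-! ### Counting reverse plane partitions -/

section Counting

variable {n k : ℕ}

variable (n k) in
/-- The filling that is added to a reverse plane partition to make its values along the zigzags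
interlace. -/
def shiftFilling (c : ℕ × ℕ) : ℕ := if c ∈ thickStrip n k then k - depth n k c else 0

theorem sum_range_sub_mul (n k : ℕ) :
    ∑ ρ ∈ range k, (2 * (n + 2 * k - ρ) - 2 * ρ - 1) * (k - ρ) =
      k * (k + 1) * (6 * n + 8 * k + 1) / 6 := by
  have hsum : ∀ m, 6 * ∑ r ∈ range m, (2 * n + 4 * r + 3) * (r + 1) =
      m * (m + 1) * (6 * n + 8 * m + 1) := fun m => by
    induction m with
    | zero => simp
    | succ m ih =>
      rw [sum_range_succ, mul_add, ih]
      ring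
  rw [← hsum k, Nat.mul_div_cancel_left _ (by norm_num), ← sum_range_reflect]
  refine sum_congr rfl fun ρ hρ => ?_
  have := mem_range.mp hρ
  congr 1 <;> omega

theorem diagValues_shiftFilling (t : ℕ) (ρ : Fin (n + k)) :
    diagValues n k (shiftFilling n k) t ρ = if Active n k t ρ then k - ρ else 0 := by
  unfold diagValues
  split_ifs with hρ
  · rw [shiftFilling, if_pos (cell_mem_thickStrip hρ), depth_cell hρ]
    omega
  · rfl

theorem sum_shiftFilling :
    ∑ c ∈ thickStrip n k, shiftFilling n k c = k * (k + 1) * (6 * n + 8 * k + 1) / 6 := by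
  have hlength : ∀ ρ : Fin (n + k), (range (2 * (n + 2 * k))).filter (fun t => Active n k t ρ) =
      Ioo (2 * (ρ : ℕ)) (2 * killTime n k ρ) := fun ρ => by
    ext t
    rw [mem_filter, mem_range, mem_Ioo]
    exact and_iff_right_of_imp fun hρ => Active.lt_top hρ
  rw [sum_thickStrip, sum_comm, ← sum_range_sub_mul]
  simp only [diagValues_shiftFilling, ← sum_filter, hlength, sum_const, Nat.card_Ioo, smul_eq_mul]
  rw [Fin.sum_univ_eq_sum_range fun ρ => (2 * killTime n k ρ - 2 * ρ - 1) * (k - ρ)]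
  refine (sum_subset_zero_on_sdiff (range_mono (Nat.le_add_left k n)) (fun ρ hρ => ?_)
    fun ρ hρ => ?_).symm
  · rw [mem_sdiff, mem_range, mem_range, not_lt] at hρ
    rw [Nat.sub_eq_zero_of_le hρ.2, mul_zero]
  · rw [killTime, if_pos (mem_range.mp hρ)]

theorem isRPP_thickStrip_iff {f : ℕ × ℕ → ℕ} :
    IsRPP (thickStrip n k) f ↔ (∀ c, c ∉ thickStrip n k → (f + shiftFilling n k) c = 0) ∧
      MonotoneOn (f + shiftFilling n k + depth n k) (thickStrip n k) := by
  have hin : ∀ c ∈ thickStrip n k, (f + shiftFilling n k + depth n k) c = f c + k := fun c hc => by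
    have hdepth : depth n k c ≤ k := by
      rw [mem_thickStrip] at hc
      rw [depth]
      omega
    simp only [Pi.add_apply, shiftFilling, if_pos hc]
    omega
  have hout : ∀ c, c ∉ thickStrip n k → (f + shiftFilling n k) c = f c := fun c hc => by
    rw [Pi.add_apply, shiftFilling, if_neg hc, add_zero]
  rw [isRPP_iff_monotoneOn ordConnected_thickStrip]
  refine and_congr (forall₂_congr fun c hc => by rw [hout c hc]) ?_
  refine forall₂_congr fun c hc => forall₂_congr fun c' hc' => ?_
  rw [hin c hc, hin c' hc', Nat.add_le_add_iff_right]

/-- The least value allowed on a cell is the one forced by the cells of depth `k`, which lie weakly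
to the north-west of any cell. -/
theorem shiftFilling_le (hn : 0 < n) {g : ℕ × ℕ → ℕ}
    (hg : MonotoneOn (g + depth n k) (thickStrip n k)) (c : ℕ × ℕ) : shiftFilling n k c ≤ g c := by
  unfold shiftFilling
  split_ifs with hc
  · have hc' := mem_thickStrip.mp hc
    have hle := @hg (min c.1 n, n + 1 - min c.1 n) (mem_thickStrip.mpr (by simp only; omega)) c hc
      ⟨by simp only; omega, by simp only; omega⟩
    simp only [Pi.add_apply] at hle
    have hdepth : depth n k (min c.1 n, n + 1 - min c.1 n) = k := by
      simp only [depth]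
      omega
    omega
  · exact Nat.zero_le _

theorem restrict_diagValues_mem_chains_iff {M : ℕ} {g : ℕ × ℕ → ℕ} (hM : ∀ c, g c < M) :
    (fun i : Fin (2 * (n + 2 * k)) => diagValues n k g i) ∈
        chains (diagStep n k M) (2 * (n + 2 * k)) 0 ↔
      MonotoneOn (g + depth n k) (thickStrip n k) := by
  have htop : diagValues n k g (2 * (n + 2 * k)) = 0 :=
    funext fun ρ => if_neg (not_active_top n k ρ)
  have hlt : ∀ t ρ, diagValues n k g t ρ < M := fun t ρ => by
    unfold diagValues
    split_ifs
    · exact hM _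
    · exact (Nat.zero_le _).trans_lt (hM 0)
  rw [← htop, restrict_mem_chains,
    forall_mem_diagStep_iff (φ := diagValues n k g) (fun t ρ hρ => if_neg hρ) hlt,
    interlacing_diagValues_iff]

theorem extendBy_eq_zero {M : ℕ} {h : Fin (2 * (n + 2 * k)) → Fin (n + k) → ℕ}
    (hh : h ∈ chains (diagStep n k M) (2 * (n + 2 * k)) 0) (t : ℕ) (ρ : Fin (n + k))
    (hρ : ¬Active n k t ρ) : extendBy h 0 t ρ = 0 := by
  rcases lt_or_ge t (2 * (n + 2 * k)) with ht | ht
  · exact (IsState.of_mem_diagStep (mem_chains_iff_extendBy.mp hh t ht)).eq_zero ρ hρ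
  · rw [extendBy_of_le h 0 ht, Pi.zero_apply]

theorem exists_diagValues_eq {M : ℕ} {h : Fin (2 * (n + 2 * k)) → Fin (n + k) → ℕ}
    (hh : h ∈ chains (diagStep n k M) (2 * (n + 2 * k)) 0) :
    ∃ g : ℕ × ℕ → ℕ, (∀ c, c ∉ thickStrip n k → g c = 0) ∧
      (fun i : Fin (2 * (n + 2 * k)) => diagValues n k g i) = h := by
  refine ⟨fillingOf n k (extendBy h 0), fun c hc => dif_neg hc, ?_⟩
  rw [diagValues_fillingOf (extendBy_eq_zero hh)]
  exact funext (extendBy_val h 0)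

theorem restrict_diagValues_injOn : Set.InjOn
    (fun g (i : Fin (2 * (n + 2 * k))) => diagValues n k g i)
    {g : ℕ × ℕ → ℕ | ∀ c, c ∉ thickStrip n k → g c = 0} := by
  intro g hg g' hg' heq
  have hvalues : diagValues n k g = diagValues n k g' := funext fun t => by
    rcases lt_or_ge t (2 * (n + 2 * k)) with ht | ht
    · exact congrFun heq ⟨t, ht⟩
    · have hinactive : ∀ ρ : Fin (n + k), ¬Active n k t ρ := fun ρ hρ => hρ.lt_top.not_ge ht
      exact funext fun ρ => (if_neg (hinactive ρ)).trans (if_neg (hinactive ρ)).symm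
  rw [← fillingOf_diagValues hg, hvalues, fillingOf_diagValues hg']

theorem sum_restrict_diagValues (g : ℕ × ℕ → ℕ) :
    ∑ i : Fin (2 * (n + 2 * k)), ∑ ρ, diagValues n k g i ρ = ∑ c ∈ thickStrip n k, g c := by
  rw [sum_thickStrip, Fin.sum_univ_eq_sum_range fun t => ∑ ρ, diagValues n k g t ρ]

theorem sum_add_shiftFilling (f : ℕ × ℕ → ℕ) :
    ∑ c ∈ thickStrip n k, (f + shiftFilling n k) c =
      ∑ c ∈ thickStrip n k, f c + k * (k + 1) * (6 * n + 8 * k + 1) / 6 := by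
  rw [← sum_shiftFilling, ← sum_add_distrib]
  rfl

theorem ncard_isRPP_eq_card_chains (hn : 0 < n) {M d : ℕ} (hd : d < M) :
    Set.ncard {f : ℕ × ℕ → ℕ | IsRPP (thickStrip n k) f ∧
        ∑ c ∈ thickStrip n k, f c + k * (k + 1) * (6 * n + 8 * k + 1) / 6 = d} =
      ((chains (diagStep n k M) (2 * (n + 2 * k)) 0).filter
        fun h => ∑ i, ∑ ρ, h i ρ = d).card := by
  have hbound : ∀ g : ℕ × ℕ → ℕ, (∀ c, c ∉ thickStrip n k → g c = 0) →
      ∑ c ∈ thickStrip n k, g c = d → ∀ c, g c < M := fun g hg hsum c => by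
    refine lt_of_le_of_lt ?_ hd
    by_cases hc : c ∈ thickStrip n k
    · exact hsum ▸ single_le_sum (fun _ _ => Nat.zero_le _) hc
    · exact hg c hc ▸ Nat.zero_le d
  rw [← Set.ncard_coe_finset]
  refine Set.ncard_congr (fun f _ i => diagValues n k (f + shiftFilling n k) i) ?_ ?_ ?_
  · rintro f ⟨hf, hsum⟩
    obtain ⟨hzero, hmono⟩ := isRPP_thickStrip_iff.mp hf
    rw [← sum_add_shiftFilling] at hsum
    exact mem_coe.mpr (mem_filter.mpr
      ⟨(restrict_diagValues_mem_chains_iff (hbound _ hzero hsum)).mpr hmono,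
        (sum_restrict_diagValues _).trans hsum⟩)
  · rintro f f' ⟨hf, -⟩ ⟨hf', -⟩ heq
    exact add_right_cancel (restrict_diagValues_injOn (isRPP_thickStrip_iff.mp hf).1
      (isRPP_thickStrip_iff.mp hf').1 heq)
  · intro h hh
    obtain ⟨hchain, hsum⟩ := mem_filter.mp (mem_coe.mp hh)
    obtain ⟨g, hzero, rfl⟩ := exists_diagValues_eq hchain
    rw [sum_restrict_diagValues] at hsum
    have hmono := (restrict_diagValues_mem_chains_iff (hbound g hzero hsum)).mp hchain
    have hsub : (fun c => g c - shiftFilling n k c) + shiftFilling n k = g :=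
      funext fun c => Nat.sub_add_cancel (shiftFilling_le hn hmono c)
    refine ⟨fun c => g c - shiftFilling n k c, ⟨?_, ?_⟩, by rw [hsub]⟩
    · rw [isRPP_thickStrip_iff, hsub]
      exact ⟨hzero, hmono⟩
    · rw [← sum_add_shiftFilling, hsub, hsum]

end Counting

/-! ### The determinant formula -/

section Conclusion

open PowerSeries

variable {n k : ℕ}

theorem coeff_X_pow_mul_rppGF (hn : 0 < n) {M d : ℕ} (hd : d < M) :
    coeff d ((X : PowerSeries ℚ) ^ (k * (k + 1) * (6 * n + 8 * k + 1) / 6) *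
        rppGF (thickStrip n k)) =
      (((chains (diagStep n k M) (2 * (n + 2 * k)) 0).filter
        fun h => ∑ i, ∑ ρ, h i ρ = d).card : ℚ) := by
  rw [← ncard_isRPP_eq_card_chains hn hd, coeff_X_pow_mul']
  split_ifs with hle
  · rw [rppGF, coeff_mk]
    congr 2
    ext f
    exact and_congr_right fun _ => eq_tsub_iff_add_eq_of_le hle
  · rw [eq_comm, Nat.cast_eq_zero]
    refine (congrArg Set.ncard (Set.eq_empty_of_forall_notMem fun f hf => hle ?_)).trans
      (Set.ncard_empty _)
    exact hf.2 ▸ Nat.le_add_left _ _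

theorem X_pow_dvd_X_pow_mul_rppGF_sub (hn : 0 < n) (M : ℕ) :
    (X : PowerSeries ℚ) ^ M ∣
      X ^ (k * (k + 1) * (6 * n + 8 * k + 1) / 6) * rppGF (thickStrip n k) -
        ∑ h ∈ chains (diagStep n k M) (2 * (n + 2 * k)) 0, X ^ ∑ i, ∑ ρ, h i ρ := by
  refine X_pow_dvd_iff.mpr fun d hd => ?_
  rw [map_sub, coeff_X_pow_mul_rppGF hn hd, map_sum, card_filter, Nat.cast_sum, sub_eq_zero]
  refine sum_congr rfl fun h _ => ?_
  rw [coeff_X_pow, Nat.cast_ite, Nat.cast_one, Nat.cast_zero]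
  exact if_congr eq_comm rfl rfl

theorem pochPS_mul_inv_cancel (m : ℕ) : pochPS m * (pochPS m)⁻¹ = 1 := by
  refine PowerSeries.mul_inv_cancel _ ?_
  rw [pochPS, map_prod, prod_eq_one fun i hi => ?_]
  · exact one_ne_zero
  · rw [map_sub, map_one, map_pow, constantCoeff_X,
      zero_pow (Nat.one_le_iff_ne_zero.mp (mem_Icc.mp hi).1), sub_zero]

variable {S : Type*} [CommRing S] {M : ℕ}

theorem map_estarEntry_odd (f : PowerSeries ℚ →+* S) (hf : f X ^ M = 0) (m : ℕ) :
    f (EstarEntry ((2 * m + 1 : ℕ) : ℤ)) = zigzagGF (f X) M (2 * m + 2) 0 0 := by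
  have hnumerator : f (EstarPS (2 * m + 1)) =
      zigzagGF (f X) M (2 * m + 2) 0 0 * f (pochPS (2 * m + 1)) := by
    simp only [EstarPS, pochPS, map_sum, map_prod, map_sub, map_one, map_pow,
      zigzagGF_mul_prod hf m]
  rw [EstarEntry, if_neg (Int.natCast_nonneg _).not_gt, Int.toNat_natCast, map_mul, hnumerator,
    mul_assoc, ← map_mul, pochPS_mul_inv_cancel, map_one, mul_one]

theorem map_estarEntry (f : PowerSeries ℚ →+* S) (hf : f X ^ M = 0) (s r : ℕ) :
    f (EstarEntry (2 * (s - r) - 1)) = zigzagGF (f X) M (2 * s) r 0 := by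
  rcases lt_or_ge r s with hrs | hsr
  · obtain ⟨m, rfl⟩ := Nat.exists_eq_add_of_lt hrs
    rw [show 2 * (r + m + 1) = 2 * m + 2 + 2 * r by ring, zigzagGF_add_two_mul,
      ← map_estarEntry_odd f hf]
    congr 2
    push_cast
    ring
  · rw [zigzagGF_eq_zero _ _ (Nat.mul_le_mul_left 2 hsr), EstarEntry, if_pos (by omega), map_zero]

theorem map_det_estarEntry (f : PowerSeries ℚ →+* S) (hf : f X ^ M = 0) :
    f (Matrix.of fun i j : Fin (n + k) =>
        EstarEntry (2 * ((i : ℕ) + 1) +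
          2 * (if n < (j : ℕ) + 1 then ((j : ℕ) : ℤ) - (n : ℤ) else -(((j : ℕ) : ℤ) + 1)) +
          1)).det =
      (Matrix.of fun ρ r : Fin (n + k) => zigzagGF (f X) M (2 * killTime n k ρ) r 0).det := by
  rw [RingHom.map_det, ← Matrix.det_transpose, ← Matrix.det_submatrix_equiv_self Fin.revPerm]
  congr 1
  ext ρ r
  simp only [RingHom.mapMatrix_apply, Matrix.submatrix_apply, Matrix.transpose_apply,
    Matrix.map_apply, Matrix.of_apply, Fin.revPerm_apply, Fin.val_rev]
  rw [← map_estarEntry f hf]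
  congr 2
  rw [killTime]
  split_ifs <;> omega

end Conclusion

theorem statement_19 (n k : ℕ) (hn : 0 < n) (hk : 0 < k) :
    (PowerSeries.X : PowerSeries ℚ) ^ (k * (k + 1) * (6 * n + 8 * k + 1) / 6) *
        rppGF (deltaCells (n + 2 * k + 1) \ deltaCells n) =
      (Matrix.of fun i j : Fin (n + k) =>
        EstarEntry (2 * ((i : ℕ) + 1) +
          2 * (if n < (j : ℕ) + 1 then ((j : ℕ) : ℤ) - (n : ℤ) else -(((j : ℕ) : ℤ) + 1)) +
          1)).det := by
  refine PowerSeries.ext fun d => sub_eq_zero.mp ?_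
  rw [← map_sub]
  refine PowerSeries.X_pow_dvd_iff.mp ?_ d d.lt_succ_self
  let I : Ideal (PowerSeries ℚ) := Ideal.span {PowerSeries.X ^ (d + 1)}
  have hX : Ideal.Quotient.mk I PowerSeries.X ^ (d + 1) = 0 := by
    rw [← map_pow]
    exact Ideal.Quotient.eq_zero_iff_mem.mpr (Ideal.mem_span_singleton_self _)
  have hdet := map_det_estarEntry (n := n) (k := k) (Ideal.Quotient.mk I) hX
  rw [det_zigzagGF_eq_sum_chains] at hdet
  have hrpp := Ideal.mem_span_singleton.mpr (X_pow_dvd_X_pow_mul_rppGF_sub (k := k) hn (d + 1))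
  rw [← Ideal.Quotient.mk_eq_mk_iff_sub_mem] at hrpp
  simp only [map_sum, map_pow] at hrpp
  rw [← Ideal.mem_span_singleton, ← Ideal.Quotient.mk_eq_mk_iff_sub_mem]
  exact hrpp.trans hdet.symm

end Paper
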